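/- arXiv:math/0307002 — 3 statements merged into one kernel-verified Lean document; each statement's English description precedes it below -/
import Mathlib

section
/- Let S ∈ sp(n,ℂ) have purely real spectrum, Re Q_S ≥ 0, and nilpotent part N (in the Jordan decomposition S = D + N) with N² = 0. Write S = S₁ + iS₂ and D = D₁ + iD₂ with S₁, S₂, D₁, D₂ real matrices. Then S₁² = 0 and [S₁,S₂] = [D₁,D₂]. -/
open MeasureTheory Complex Matrix

noncomputable section

/-- Index type for `2n`-dimensional (symplectic) vectors: `X`-coordinates `inl j`,
`Y`-coordinates `inr j`. -/
abbrev Idx (n : ℕ) := Fin n ⊕ Fin n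

/-- The standard symplectic matrix `J = [[0, I],[-I, 0]]` over `ℂ`. -/
def Jmat (n : ℕ) : Matrix (Idx n) (Idx n) ℂ := Matrix.fromBlocks 0 1 (-1) 0

/-- The standard symplectic matrix `J = [[0, I],[-I, 0]]` over `ℝ`. -/
def JmatR (n : ℕ) : Matrix (Idx n) (Idx n) ℝ := Matrix.fromBlocks 0 1 (-1) 0

/-- The standard symplectic form `σ(z,w) = ᵗz J w` on `ℂ^{2n}`. -/
def sigmaC (n : ℕ) (z w : Idx n → ℂ) : ℂ := z ⬝ᵥ (Jmat n).mulVec w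

/-- The standard symplectic form on `ℝ^{2n}`. -/
def sigmaR (n : ℕ) (v w : Idx n → ℝ) : ℝ := v ⬝ᵥ (JmatR n).mulVec w

/-- Inclusion of real vectors into `ℂ^{2n}`. -/
def realVec (n : ℕ) (v : Idx n → ℝ) : Idx n → ℂ := fun i => (v i : ℂ)

/-- Complex conjugation on `ℂ^{2n}` relative to the real form `ℝ^{2n}`. -/
def conjVec (n : ℕ) (z : Idx n → ℂ) : Idx n → ℂ := fun i => (starRingEnd ℂ) (z i)

/-- `S ∈ sp(n, ℂ)`, i.e. `σ(Sz, w) + σ(z, Sw) = 0` for all `z, w`. -/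
def InSp (n : ℕ) (S : Matrix (Idx n) (Idx n) ℂ) : Prop := Sᵀ * Jmat n + Jmat n * S = 0

/-- `Re Q_S ≥ 0`: the real part of the quadratic form `Q_S(v) = σ(v, Sv)` is
positive semi-definite on `ℝ^{2n}`. -/
def RePosQ (n : ℕ) (S : Matrix (Idx n) (Idx n) ℂ) : Prop :=
  ∀ v : Idx n → ℝ, 0 ≤ (sigmaC n (realVec n v) (S.mulVec (realVec n v))).re

/-- The generalized eigenspace `V_μ` of the matrix `S` for the eigenvalue `μ`. -/
def genEig (n : ℕ) (S : Matrix (Idx n) (Idx n) ℂ) (μ : ℂ) : Submodule ℂ (Idx n → ℂ) :=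
  Module.End.maxGenEigenspace (Matrix.mulVecLin S) μ

/-- `V_r`: the sum of the generalized eigenspaces of `S` for real eigenvalues. -/
def Vreal (n : ℕ) (S : Matrix (Idx n) (Idx n) ℂ) : Submodule ℂ (Idx n → ℂ) :=
  ⨆ lam : ℝ, genEig n S (lam : ℂ)

/-- `V_i`: the sum of the generalized eigenspaces of `S` for non-real eigenvalues. -/
def Vimag (n : ℕ) (S : Matrix (Idx n) (Idx n) ℂ) : Submodule ℂ (Idx n → ℂ) :=
  ⨆ μ : {z : ℂ // z.im ≠ 0}, genEig n S (μ : ℂ)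

/-- `Sr` is the "real part" `S_r` of `S`: it agrees with `S` on `V_r` and vanishes on `V_i`. -/
def IsRealPart (n : ℕ) (S Sr : Matrix (Idx n) (Idx n) ℂ) : Prop :=
  (∀ v ∈ Vreal n S, Sr.mulVec v = S.mulVec v) ∧ ∀ v ∈ Vimag n S, Sr.mulVec v = 0

/-- `Si` is the "imaginary part" `S_i` of `S`: it vanishes on `V_r` and agrees with `S`
on `V_i`. -/
def IsImagPart (n : ℕ) (S Si : Matrix (Idx n) (Idx n) ℂ) : Prop :=
  (∀ v ∈ Vreal n S, Si.mulVec v = 0) ∧ ∀ v ∈ Vimag n S, Si.mulVec v = S.mulVec v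

/-- Condition (R): `V_λ ⊕ V_{−λ}` is invariant under complex conjugation for every
real `λ ≠ 0`. -/
def CondR (n : ℕ) (S : Matrix (Idx n) (Idx n) ℂ) : Prop :=
  ∀ lam : ℝ, lam ≠ 0 →
    ∀ z ∈ genEig n S (lam : ℂ) ⊔ genEig n S (-(lam : ℂ)),
      conjVec n z ∈ genEig n S (lam : ℂ) ⊔ genEig n S (-(lam : ℂ))

/-- `ν = Σ_j ν_j`: the sum of the imaginary parts of the eigenvalues of `S` lying in the
upper half plane, counted with multiplicity. -/
def nuTotal (n : ℕ) (S : Matrix (Idx n) (Idx n) ℂ) : ℝ :=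
  (S.charpoly.roots.map (fun z => max z.im 0)).sum

/-- `S_i ≠ 0`, i.e. `S` has at least one non-real eigenvalue. -/
def HasNonrealEig (n : ℕ) (S : Matrix (Idx n) (Idx n) ℂ) : Prop :=
  ∃ z ∈ S.charpoly.roots, z.im ≠ 0

/-- Semisimple (= diagonalizable over `ℂ`) matrix. -/
def IsSemisimpleMat (n : ℕ) (D : Matrix (Idx n) (Idx n) ℂ) : Prop :=
  ∃ (P : Matrix (Idx n) (Idx n) ℂ) (d : Idx n → ℂ), IsUnit P ∧ D = P * Matrix.diagonal d * P⁻¹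

/-- `S = D + N` is the Jordan decomposition of `S`: `D` semisimple, `N` nilpotent,
`DN = ND`. -/
def IsJordanDecomp (n : ℕ) (S D N : Matrix (Idx n) (Idx n) ℂ) : Prop :=
  S = D + N ∧ IsSemisimpleMat n D ∧ IsNilpotent N ∧ D * N = N * D

lemma aux_inter {ι : Type*} [Fintype ι] [DecidableEq ι] (D N D' N' X P P' : Matrix ι ι ℂ)
    (d d' : ι → ℂ) (hP : IsUnit P) (hP' : IsUnit P')
    (hD : D = P * diagonal d * P⁻¹) (hD' : D' = P' * diagonal d' * P'⁻¹)
    (hN : N * N = 0) (hN' : N' * N' = 0) (hc : D * N = N * D) (hc' : D' * N' = N' * D')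
    (h : (D + N) * X = X * (D' + N')) : N * X = X * N' := by
  have h1 : D * X - X * D' = X * N' - N * X := by
    rw [add_mul, mul_add] at h
    rw [sub_eq_sub_iff_add_eq_add, h, add_comm]
  have hNa : ∀ Y, N * (N * Y) = 0 := fun Y => by rw [← mul_assoc, hN, zero_mul]
  have hca : ∀ Y, D * (N * Y) = N * (D * Y) := fun Y => by
    rw [← mul_assoc, hc, mul_assoc]
  -- third power of the commutator with `D`
  have h2 : D * (D * X - X * D') - (D * X - X * D') * D' = - (2 : ℂ) • (N * X * N') := by
    have e : D * (X * N' - N * X) - (X * N' - N * X) * D'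
        = (D * X - X * D') * N' - N * (D * X - X * D') := by
      simp only [mul_sub, sub_mul, mul_assoc, hca, hc']
      abel
    rw [h1, e, h1]
    simp only [mul_sub, sub_mul, mul_assoc, hNa, hN', mul_zero, sub_zero, zero_sub]
    module
  have h3 : D * (N * X * N') - (N * X * N') * D' = 0 := by
    have e : D * (N * X * N') - (N * X * N') * D' = N * (D * X - X * D') * N' := by
      simp only [mul_sub, sub_mul, mul_assoc, hca, hc']
    rw [e, h1]
    simp only [mul_sub, sub_mul, mul_assoc, hNa, hN', mul_zero, sub_zero]
  have h4 : D * (D * (D * X - X * D') - (D * X - X * D') * D')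
      - (D * (D * X - X * D') - (D * X - X * D') * D') * D' = 0 := by
    rw [h2, mul_smul_comm, smul_mul_assoc, ← smul_sub, h3, smul_zero]
  have hdet := (Matrix.isUnit_iff_isUnit_det _).1 hP
  have hdet' := (Matrix.isUnit_iff_isUnit_det _).1 hP'
  have tr : ∀ Y, D * Y - Y * D' =
      P * (diagonal d * (P⁻¹ * Y * P') - (P⁻¹ * Y * P') * diagonal d') * P'⁻¹ := by
    intro Y
    rw [hD, hD']
    simp only [mul_sub, sub_mul, mul_assoc, Matrix.mul_nonsing_inv_cancel_left _ _ hdet,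
      Matrix.mul_nonsing_inv _ hdet', mul_one]
  have tr2 : ∀ Y, P⁻¹ * (D * Y - Y * D') * P' =
      diagonal d * (P⁻¹ * Y * P') - (P⁻¹ * Y * P') * diagonal d' := by
    intro Y
    rw [tr]
    simp only [mul_assoc, Matrix.nonsing_inv_mul_cancel_left _ _ hdet,
      Matrix.nonsing_inv_mul _ hdet', mul_one]
  have h5 : P⁻¹ * (D * (D * (D * X - X * D') - (D * X - X * D') * D')
      - (D * (D * X - X * D') - (D * X - X * D') * D') * D') * P' = 0 := by
    rw [h4]; simp
  rw [tr2, tr2, tr2] at h5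
  have h6 : D * X - X * D' = 0 := by
    rw [tr]
    have : diagonal d * (P⁻¹ * X * P') - (P⁻¹ * X * P') * diagonal d' = 0 := by
      generalize P⁻¹ * X * P' = Y at h5 ⊢
      ext i j
      have h7 := congrFun (congrFun h5 i) j
      simp only [Matrix.sub_apply, diagonal_mul, mul_diagonal, Matrix.zero_apply] at h7 ⊢
      have h8 : (d i - d' j) ^ 3 * Y i j = 0 := by linear_combination h7
      rcases mul_eq_zero.1 h8 with h9 | h9
      · have := pow_eq_zero_iff (three_ne_zero) |>.1 h9
        linear_combination Y i j * this
      · rw [h9]; ring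
    rw [this]; simp
  rw [h6] at h1
  exact (sub_eq_zero.1 h1.symm).symm

/-- Conjugation on matrices. -/
def cj {ι : Type*} (A : Matrix ι ι ℂ) : Matrix ι ι ℂ := A.map (starRingEnd ℂ)

lemma cj_mul {ι : Type*} [Fintype ι] (A B : Matrix ι ι ℂ) : cj (A * B) = cj A * cj B :=
  Matrix.map_mul

lemma cj_cj {ι : Type*} (A : Matrix ι ι ℂ) : cj (cj A) = A := by
  ext i j; simp [cj]

lemma cj_add {ι : Type*} (A B : Matrix ι ι ℂ) : cj (A + B) = cj A + cj B := by
  ext i j; simp [cj]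

lemma cj_zero {ι : Type*} : cj (0 : Matrix ι ι ℂ) = 0 := by
  ext i j; simp [cj]

lemma cj_J (n : ℕ) : cj (Jmat n) = Jmat n := by
  ext i j
  rcases i with i | i <;> rcases j with j | j <;> simp [cj, Jmat, Matrix.one_apply, apply_ite]

lemma J_T (n : ℕ) : (Jmat n)ᵀ = - Jmat n := by
  simp [Jmat, Matrix.fromBlocks_transpose, Matrix.fromBlocks_neg]

lemma J_J (n : ℕ) : Jmat n * Jmat n = -1 := by
  rw [Jmat, Matrix.fromBlocks_multiply]
  simp [← Matrix.fromBlocks_one, Matrix.fromBlocks_neg]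

lemma im_comm {ι : Type*} [Fintype ι] (A : Matrix ι ι ℂ) :
    (A * cj A - cj A * A).map Complex.im = (-2 : ℝ) •
      (A.map Complex.re * A.map Complex.im - A.map Complex.im * A.map Complex.re) := by
  ext i j
  simp only [map_apply, Matrix.sub_apply, mul_apply, cj, Matrix.smul_apply, Complex.sub_im, Complex.im_sum,
    Complex.mul_im, Complex.conj_re, Complex.conj_im, smul_eq_mul, ← Finset.sum_sub_distrib,
    Finset.mul_sum]
  exact Finset.sum_congr rfl fun k _ => by ring

lemma eig_ker (n : ℕ) (S : Matrix (Idx n) (Idx n) ℂ) (hS : InSp n S) (hpos : RePosQ n S)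
    (lam : ℂ) (hlam : lam.im = 0) (u : Idx n → ℂ) (hu : S *ᵥ u = lam • u) :
    (S.map Complex.re) *ᵥ (fun i => (u i).re) = 0 ∧
    (S.map Complex.re) *ᵥ (fun i => (u i).im) = 0 := by
  set x : Idx n → ℝ := fun i => (u i).re with hx
  set y : Idx n → ℝ := fun i => (u i).im with hy
  set S1 := S.map Complex.re with hS1
  set S2 := S.map Complex.im with hS2
  -- real and imaginary parts of the eigen-equation
  have e1 : S1 *ᵥ x - S2 *ᵥ y = lam.re • x := by
    ext i
    have := congrArg Complex.re (congrFun hu i)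
    simp only [mulVec, dotProduct, Complex.re_sum, Complex.mul_re, Finset.sum_sub_distrib,
      Pi.smul_apply, smul_eq_mul, hlam, zero_mul, sub_zero, add_zero] at this
    simpa only [mulVec, dotProduct, hS1, hS2, hx, hy, map_apply, Pi.sub_apply,
      Pi.smul_apply, smul_eq_mul] using this
  have e2 : S1 *ᵥ y + S2 *ᵥ x = lam.re • y := by
    ext i
    have := congrArg Complex.im (congrFun hu i)
    simp only [mulVec, dotProduct, Complex.im_sum, Complex.mul_im, Finset.sum_add_distrib,
      Pi.smul_apply, smul_eq_mul, hlam, zero_mul, sub_zero, add_zero] at this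
    simpa only [mulVec, dotProduct, hS1, hS2, hx, hy, map_apply, Pi.add_apply,
      Pi.smul_apply, smul_eq_mul] using this
  have hJre : (Jmat n).map Complex.re = JmatR n := by
    ext i j
    rcases i with i | i <;> rcases j with j | j <;>
      simp [JmatR, Jmat, Matrix.one_apply, apply_ite]
  have hJim : ∀ i j, (Jmat n i j).im = 0 := by
    intro i j
    rcases i with i | i <;> rcases j with j | j <;>
      simp [Jmat, Matrix.one_apply, apply_ite]
  have hJre' : ∀ i j, (Jmat n i j).re = JmatR n i j := fun i j => by rw [← hJre]; rfl
  have JT : (JmatR n)ᵀ = - JmatR n := by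
    simp [JmatR, Matrix.fromBlocks_transpose, Matrix.fromBlocks_neg]
  have JJ : JmatR n * JmatR n = -1 := by
    rw [JmatR, Matrix.fromBlocks_multiply]
    simp [← Matrix.fromBlocks_one, Matrix.fromBlocks_neg]
  have s1 : S1ᵀ * JmatR n + JmatR n * S1 = 0 := by
    ext i j
    have := congrArg Complex.re (congrFun (congrFun hS i) j)
    simpa [mul_apply, Complex.re_sum, hJim, hJre', hS1] using this
  have s2 : S2ᵀ * JmatR n + JmatR n * S2 = 0 := by
    ext i j
    have := congrArg Complex.im (congrFun (congrFun hS i) j)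
    simpa [mul_apply, Complex.im_sum, hJim, hJre', hS2] using this
  set A1 := JmatR n * S1 with hA1
  set A2 := JmatR n * S2 with hA2
  have t1 : A1ᵀ = A1 := by
    rw [hA1, transpose_mul, JT, mul_neg]; exact neg_eq_of_add_eq_zero_right s1
  have t2 : A2ᵀ = A2 := by
    rw [hA2, transpose_mul, JT, mul_neg]; exact neg_eq_of_add_eq_zero_right s2
  have pos : ∀ v : Idx n → ℝ, 0 ≤ v ⬝ᵥ A1 *ᵥ v := by
    intro v
    have := hpos v
    rw [hA1, ← mulVec_mulVec]
    simpa [sigmaC, realVec, dotProduct, mulVec, Complex.re_sum, Complex.im_sum, hJim, hJre', hS1]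
      using this
  have psd : A1.PosSemidef := by
    refine Matrix.PosSemidef.of_dotProduct_mulVec_nonneg ?_ (fun v => by simpa using pos v)
    rw [Matrix.IsHermitian, conjTranspose_eq_transpose_of_trivial, t1]
  have f1 : A1 *ᵥ x - A2 *ᵥ y = lam.re • (JmatR n *ᵥ x) := by
    rw [hA1, hA2, ← mulVec_mulVec, ← mulVec_mulVec, ← mulVec_sub, e1, mulVec_smul]
  have f2 : A1 *ᵥ y + A2 *ᵥ x = lam.re • (JmatR n *ᵥ y) := by
    rw [hA1, hA2, ← mulVec_mulVec, ← mulVec_mulVec, ← mulVec_add, e2, mulVec_smul]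
  have skew : ∀ a : Idx n → ℝ, a ⬝ᵥ JmatR n *ᵥ a = 0 := by
    intro a
    have h : a ⬝ᵥ JmatR n *ᵥ a = - (a ⬝ᵥ JmatR n *ᵥ a) := by
      conv_lhs => rw [dotProduct_mulVec, ← mulVec_transpose, JT, neg_mulVec, neg_dotProduct,
        dotProduct_comm]
    linarith
  have symm2 : x ⬝ᵥ A2 *ᵥ y = y ⬝ᵥ A2 *ᵥ x := by
    rw [dotProduct_mulVec, ← mulVec_transpose, t2, dotProduct_comm]
  have g1 := congrArg (fun w => x ⬝ᵥ w) f1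
  have g2 := congrArg (fun w => y ⬝ᵥ w) f2
  simp only [dotProduct_sub, dotProduct_add, dotProduct_smul, skew, smul_zero] at g1 g2
  have px := pos x
  have py := pos y
  have zx : x ⬝ᵥ A1 *ᵥ x = 0 := by linarith
  have zy : y ⬝ᵥ A1 *ᵥ y = 0 := by linarith
  have kx : A1 *ᵥ x = 0 := (psd.dotProduct_mulVec_zero_iff x).1 (by simpa using zx)
  have ky : A1 *ᵥ y = 0 := (psd.dotProduct_mulVec_zero_iff y).1 (by simpa using zy)
  have back : ∀ a, A1 *ᵥ a = 0 → S1 *ᵥ a = 0 := by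
    intro a ha
    have := congrArg (fun w => JmatR n *ᵥ w) ha
    simpa [hA1, mulVec_mulVec, ← mul_assoc, JJ, neg_mulVec] using this
  exact ⟨back x kx, back y ky⟩

lemma eig_ker' (n : ℕ) (S : Matrix (Idx n) (Idx n) ℂ) (hS : InSp n S) (hpos : RePosQ n S)
    (lam : ℂ) (hlam : lam.im = 0) (u : Idx n → ℂ) (hu : S *ᵥ u = lam • u) :
    (S + cj S) *ᵥ u = 0 := by
  obtain ⟨h1, h2⟩ := eig_ker n S hS hpos lam hlam u hu
  ext i
  have h1 := congrFun h1 i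
  have h2 := congrFun h2 i
  simp only [mulVec, dotProduct, map_apply, Pi.zero_apply] at h1 h2
  apply Complex.ext
  · simp only [mulVec, dotProduct, Complex.re_sum, Matrix.add_apply, cj, map_apply, Complex.mul_re,
      Complex.add_re, Complex.add_im, Complex.conj_re, Complex.conj_im, Pi.zero_apply,
      Complex.zero_re]
    rw [← mul_zero 2, ← h1, Finset.mul_sum]
    exact Finset.sum_congr rfl fun k _ => by ring
  · simp only [mulVec, dotProduct, Complex.im_sum, Matrix.add_apply, cj, map_apply, Complex.mul_im,
      Complex.add_re, Complex.add_im, Complex.conj_re, Complex.conj_im, Pi.zero_apply,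
      Complex.zero_im]
    rw [← mul_zero 2, ← h2, Finset.mul_sum]
    exact Finset.sum_congr rfl fun k _ => by ring

lemma ker_N (n : ℕ) (S D N : Matrix (Idx n) (Idx n) ℂ)
    (hS : InSp n S) (hreal : ∀ z ∈ S.charpoly.roots, z.im = 0)
    (hpos : RePosQ n S) (hJ : IsJordanDecomp n S D N) (v : Idx n → ℂ) (hv : N *ᵥ v = 0) :
    (S + cj S) *ᵥ v = 0 := by
  obtain ⟨hSDN, ⟨P, d, hP, hD⟩, -, hc⟩ := hJ
  have hdet := (Matrix.isUnit_iff_isUnit_det _).1 hP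
  set M := P⁻¹ * N * P with hM
  set w := P⁻¹ *ᵥ v with hw
  have hMw : M *ᵥ w = 0 := by
    rw [hM, hw, mulVec_mulVec, mul_assoc, mul_assoc, Matrix.mul_nonsing_inv _ hdet, mul_one,
      ← mulVec_mulVec, hv, mulVec_zero]
  have hMd : ∀ i j, d i ≠ d j → M i j = 0 := by
    intro i j hij
    have h1 : diagonal d * M = M * diagonal d := by
      have : P⁻¹ * (D * N) * P = P⁻¹ * (N * D) * P := by rw [hc]
      rw [hD] at this
      simpa only [hM, mul_assoc, Matrix.nonsing_inv_mul_cancel_left _ _ hdet,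
        Matrix.nonsing_inv_mul _ hdet, mul_one] using this
    have h2 := congrFun (congrFun h1 i) j
    simp only [diagonal_mul, mul_diagonal] at h2
    have h3 : (d i - d j) * M i j = 0 := by linear_combination h2
    exact (mul_eq_zero.1 h3).resolve_left (sub_ne_zero.2 hij)
  let wm : ℂ → Idx n → ℂ := fun μ i => if d i = μ then w i else 0
  have hPM : P * M = N * P := by
    rw [hM, ← mul_assoc, ← mul_assoc, Matrix.mul_nonsing_inv _ hdet, one_mul]
  have hDP : D * P = P * diagonal d := by
    rw [hD, mul_assoc, Matrix.nonsing_inv_mul _ hdet, mul_one]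
  have hMwm : ∀ μ, M *ᵥ wm μ = 0 := by
    intro μ
    ext i
    have h0 := congrFun hMw i
    simp only [mulVec, dotProduct, Pi.zero_apply, wm] at h0 ⊢
    by_cases hi : d i = μ
    · rw [← h0]
      refine Finset.sum_congr rfl fun j _ => ?_
      by_cases hj : d j = μ
      · simp [hj]
      · rw [hMd i j (fun h => hj (h ▸ hi))]; simp
    · refine Finset.sum_eq_zero fun j _ => ?_
      by_cases hj : d j = μ
      · rw [hMd i j (fun h => hi (h ▸ hj))]; simp
      · simp [hj]
  have hSu : ∀ μ, S *ᵥ (P *ᵥ wm μ) = μ • (P *ᵥ wm μ) := by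
    intro μ
    have e : diagonal d *ᵥ wm μ = μ • wm μ := by
      ext i
      simp only [mulVec_diagonal, Pi.smul_apply, smul_eq_mul, wm]
      split_ifs with h
      · rw [h]
      · simp
    rw [hSDN, mulVec_mulVec, add_mul, hDP, ← hPM, add_mulVec, ← mulVec_mulVec, ← mulVec_mulVec,
      hMwm, e, mulVec_smul, mulVec_zero, add_zero]
  have hR : ∀ μ, (S + cj S) *ᵥ (P *ᵥ wm μ) = 0 := by
    intro μ
    by_cases h0 : P *ᵥ wm μ = 0
    · rw [h0, mulVec_zero]
    · refine eig_ker' n S hS hpos μ (hreal μ ?_) _ (hSu μ)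
      rw [Polynomial.mem_roots (Matrix.charpoly_monic S).ne_zero]
      have hev : Module.End.HasEigenvalue (Matrix.toLin' S) μ :=
        Module.End.hasEigenvalue_of_hasEigenvector (x := P *ᵥ wm μ)
          ⟨Module.End.mem_eigenspace_iff.2 (by simpa using hSu μ), h0⟩
      have := Module.End.hasEigenvalue_iff_isRoot_charpoly _ _ |>.1 hev
      rwa [Matrix.charpoly_toLin'] at this
  have hsum : v = ∑ μ ∈ Finset.univ.image d, P *ᵥ wm μ := by
    have e : w = ∑ μ ∈ Finset.univ.image d, wm μ := by
      ext i
      simp [wm, Finset.sum_apply]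
    have : v = P *ᵥ w := by
      rw [hw, mulVec_mulVec, Matrix.mul_nonsing_inv _ hdet, one_mulVec]
    rw [this]
    conv_lhs => rw [e]
    exact map_sum (Matrix.mulVecLin P) _ _
  rw [hsum]
  have := map_sum (Matrix.mulVecLin (S + cj S)) (fun μ => P *ᵥ wm μ) (Finset.univ.image d)
  simp only [mulVecLin_apply] at this
  rw [this]
  exact Finset.sum_eq_zero fun μ _ => hR μ

lemma ker_N_mat (n : ℕ) (S D N : Matrix (Idx n) (Idx n) ℂ)
    (hS : InSp n S) (hreal : ∀ z ∈ S.charpoly.roots, z.im = 0)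
    (hpos : RePosQ n S) (hJ : IsJordanDecomp n S D N) (Y : Matrix (Idx n) (Idx n) ℂ)
    (hY : N * Y = 0) : (S + cj S) * Y = 0 := by
  ext i j
  have := ker_N n S D N hS hreal hpos hJ (fun k => Y k j) (by
    ext i; exact congrFun (congrFun hY i) j)
  exact congrFun this i

/-- if `S ∈ sp(n,ℂ)` has purely real spectrum, `Re Q_S ≥ 0` and `N² = 0`,
then `S₁² = 0` and `[S₁, S₂] = [D₁, D₂]`. -/
theorem statement8 (n : ℕ) (S D N : Matrix (Idx n) (Idx n) ℂ)
    (hS : InSp n S) (hreal : ∀ z ∈ S.charpoly.roots, z.im = 0)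
    (hpos : RePosQ n S) (hJ : IsJordanDecomp n S D N) (hN2 : N * N = 0) :
    (S.map Complex.re) * (S.map Complex.re) = 0 ∧
    (S.map Complex.re) * (S.map Complex.im) - (S.map Complex.im) * (S.map Complex.re) =
      (D.map Complex.re) * (D.map Complex.im) - (D.map Complex.im) * (D.map Complex.re) := by
  have hJ' := hJ
  obtain ⟨hSDN, ⟨P, d, hP, hD⟩, -, hc⟩ := hJ'
  have hdet := (Matrix.isUnit_iff_isUnit_det _).1 hP
  -- `N` is in `sp`
  have hNT : Nᵀ * Jmat n = Jmat n * (-N) := by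
    refine aux_inter Dᵀ Nᵀ (-D) (-N) (Jmat n) (P⁻¹)ᵀ P d (-d) ?_ hP ?_ ?_ ?_ ?_ ?_ ?_ ?_
    · rw [Matrix.isUnit_iff_isUnit_det, det_transpose]
      exact (Matrix.isUnit_nonsing_inv_det_iff).2 hdet
    · rw [hD, transpose_mul, transpose_mul, diagonal_transpose, ← transpose_nonsing_inv,
        Matrix.nonsing_inv_nonsing_inv _ hdet, mul_assoc]
    · rw [hD, show diagonal (-d) = - diagonal d from (diagonal_neg d).symm, mul_neg, neg_mul]
    · rw [← transpose_mul, hN2, transpose_zero]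
    · simpa using hN2
    · rw [← transpose_mul, ← transpose_mul, hc]
    · simpa using hc
    · rw [← transpose_add, ← neg_add, ← hSDN, mul_neg]
      exact eq_neg_of_add_eq_zero_left hS
  set R := S + cj S with hRdef
  have hRT : Rᵀ * Jmat n = Jmat n * (-R) := by
    have h2 : (cj S)ᵀ * Jmat n + Jmat n * cj S = 0 := by
      have := congrArg cj hS
      rw [cj_add, cj_mul, cj_mul, cj_J, cj_zero] at this
      exact this
    have h1 : Sᵀ * Jmat n + Jmat n * S = 0 := hS
    rw [hRdef, transpose_add, add_mul, neg_add, mul_add, mul_neg, mul_neg,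
      eq_neg_of_add_eq_zero_left h1, eq_neg_of_add_eq_zero_left h2]
  have hRN : R * N = 0 := ker_N_mat n S D N hS hreal hpos hJ N hN2
  have hNR : N * R = 0 := by
    have h1 : (Nᵀ * Rᵀ) * Jmat n = 0 := by
      rw [← transpose_mul, hRN, transpose_zero, zero_mul]
    rw [mul_assoc, hRT, ← mul_assoc, hNT] at h1
    have h2 : Jmat n * (Jmat n * -N * -R) = 0 := by rw [h1, mul_zero]
    simpa [← mul_assoc, J_J] using h2
  have hRR : R * R = 0 := ker_N_mat n S D N hS hreal hpos hJ R hNR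
  constructor
  · ext i j
    have h := congrArg Complex.re (congrFun (congrFun hRR i) j)
    simp only [mul_apply, hRdef, cj, Matrix.add_apply, map_apply, Complex.re_sum, Complex.mul_re,
      Complex.add_re, Complex.add_im, Complex.conj_re, Complex.conj_im, Matrix.zero_apply,
      Complex.zero_re] at h ⊢
    have h4 : (4 : ℝ) * ∑ k, (S i k).re * (S k j).re = 0 := by
      rw [← h, Finset.mul_sum]
      exact Finset.sum_congr rfl fun k _ => by ring
    linarith
  · have hSN : S * N = N * S := by rw [hSDN, add_mul, mul_add, hc]
    have hcSN : cj S * N = N * cj S := by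
      rw [hRdef, add_mul] at hRN
      rw [hRdef, mul_add] at hNR
      rw [eq_neg_of_add_eq_zero_right hRN, eq_neg_of_add_eq_zero_right hNR, hSN]
    have hScN : S * cj N = cj N * S := by
      have := congrArg cj hcSN
      rwa [cj_mul, cj_mul, cj_cj] at this
    have hcS : cj S = cj D + cj N := by rw [hSDN, cj_add]
    have hcPP : cj P * cj P⁻¹ = 1 := by
      rw [← cj_mul, Matrix.mul_nonsing_inv _ hdet]
      ext i j; simp [cj, Matrix.one_apply, apply_ite]
    have hcN2 : cj N * cj N = 0 := by rw [← cj_mul, hN2, cj_zero]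
    have hcc : cj D * cj N = cj N * cj D := by rw [← cj_mul, ← cj_mul, hc]
    have hcPu : IsUnit (cj P) := by
      rw [Matrix.isUnit_iff_isUnit_det]
      exact Matrix.isUnit_det_of_right_inverse hcPP
    have hcD : cj D = cj P * diagonal (fun i => starRingEnd ℂ (d i)) * (cj P)⁻¹ := by
      rw [Matrix.inv_eq_right_inv hcPP, hD, cj_mul, cj_mul]
      congr 2
      ext i j
      by_cases hij : i = j <;> simp [cj, diagonal_apply, hij]
    have hNN : cj N * N = N * cj N :=
      aux_inter (cj D) (cj N) (cj D) (cj N) N (cj P) (cj P) _ _ hcPu hcPu hcD hcD hcN2 hcN2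
        hcc hcc (by rw [← hcS]; exact hcSN)
    have hDS : D = S - N := by rw [hSDN]; abel
    have hcDS : cj D = cj S - cj N := by rw [hcS]; abel
    have key : S * cj S - cj S * S = D * cj D - cj D * D := by
      rw [hcDS, hDS]
      simp only [mul_sub, sub_mul, hcSN, hScN, hNN]
      abel
    have h := congrArg (fun M : Matrix (Idx n) (Idx n) ℂ => M.map Complex.im) key
    simp only [im_comm] at h
    exact smul_right_injective _ (by norm_num : (-2 : ℝ) ≠ 0) h
end
end

section
/- Let μ ∈ ℝ∖{0} and let S = −AJ ∈ sp(n,ℂ) with Re Q_S ≥ 0 (equivalently Re A positive semidefinite). Consider the μ-twisted operator L̃^μ_S := Σ_{j,k=1}^{2n} a_{jk} Ṽ_j^μ Ṽ_k^μ on L²(ℝ^{2n}) with its maximal domain, where Ṽ_j^μ = ∂_{x_j} − πiμ y_j and Ṽ_{n+j}^μ = ∂_{y_j} + πiμ x_j for j = 1,…,n. Then L̃^μ_S and its adjoint L̃^μ_{S̄} (the maximal operator associated with the conjugate matrix Ā) are dissipative, i.e. Re ⟨L̃^μ_S f, f⟩_{L²} ≤ 0 for every f in the maximal domain (and likewise for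 L̃^μ_{S̄}); consequently L̃^μ_S generates a contraction semigroup exp(t L̃^μ_S), t ≥ 0, on L²(ℝ^{2n}). -/
open MeasureTheory Complex Matrix

noncomputable section

/-- The underlying space `ℝ^{2n} = ℝ^n × ℝ^n` of the twisted (partial Fourier
transformed) picture. -/
abbrev Pl (n : ℕ) := (Fin n → ℝ) × (Fin n → ℝ)

/-- The `μ`-twisted vector fields `Ṽ_j^μ`: `X̃_j^μ = ∂_{x_j} - πiμ y_j` and
`Ỹ_j^μ = ∂_{y_j} + πiμ x_j`. -/
def tVop (n : ℕ) (μ : ℝ) : Idx n → (Pl n → ℂ) → Pl n → ℂ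
  | Sum.inl j => fun f p =>
      fderiv ℝ f p (Pi.single j 1, 0) -
        (Real.pi : ℂ) * Complex.I * (μ : ℂ) * (p.2 j : ℂ) * f p
  | Sum.inr j => fun f p =>
      fderiv ℝ f p (0, Pi.single j 1) +
        (Real.pi : ℂ) * Complex.I * (μ : ℂ) * (p.1 j : ℂ) * f p

/-- The `μ`-twisted operator `L̃^μ_A = Σ_{j,k} a_{jk} Ṽ_j^μ Ṽ_k^μ`. -/
def tLop (n : ℕ) (A : Matrix (Idx n) (Idx n) ℂ) (μ : ℝ) (f : Pl n → ℂ) : Pl n → ℂ :=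
  fun p => ∑ j, ∑ k, A j k * tVop n μ j (tVop n μ k f) p

/-- `g = L̃^μ_A f` in the sense of distributions: for every test function `φ`,
`∫ f ⋅ (L̃^μ_A)ᵗ φ = ∫ g φ`, where the formal transpose of `L̃^μ_A` (for symmetric `A`)
is `L̃^{-μ}_A`.  Thus `f` belongs to the maximal domain of `L̃^μ_A` on `L²` precisely
when such a `g ∈ L²` exists. -/
def WeakTL (n : ℕ) (A : Matrix (Idx n) (Idx n) ℂ) (μ : ℝ) (f g : Pl n → ℂ) : Prop :=
  ∀ φ : Pl n → ℂ, ContDiff ℝ (⊤ : ℕ∞) φ → HasCompactSupport φ →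
    ∫ x, f x * tLop n A (-μ) φ x = ∫ x, g x * φ x

set_option linter.unusedSectionVars false

namespace HY
open Filter Topology NormedSpace

variable {H : Type*} [NormedAddCommGroup H] [InnerProductSpace ℂ H] [CompleteSpace H]

theorem hasDeriv_exp (B : H →L[ℂ] H) (f : H) (t : ℝ) :
    HasDerivAt (fun u : ℝ => NormedSpace.exp (u • B) f) (NormedSpace.exp (t • B) (B f)) t := by
  have h := hasDerivAt_exp_smul_const (𝕂 := ℝ) B t
  have h2 := ((ContinuousLinearMap.apply ℂ H f).restrictScalars ℝ).hasFDerivAt.comp_hasDerivAt t h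
  simpa [Function.comp_def] using h2

theorem exp_contr (B : H →L[ℂ] H) (hB : ∀ v, (inner ℂ v (B v)).re ≤ 0) (t : ℝ) (ht : 0 ≤ t) (f : H) :
    ‖NormedSpace.exp (t • B) f‖ ≤ ‖f‖ := by
  let _ : InnerProductSpace ℝ H := InnerProductSpace.complexToReal
  have hcomm : ∀ (t : ℝ) (f : H), NormedSpace.exp (t • B) (B f) = B (NormedSpace.exp (t • B) f) := by
    intro t f
    have : Commute (NormedSpace.exp (t • B)) B :=
      ((Commute.refl B).smul_left t).exp_left
    exact DFunLike.congr_fun this.eq f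
  have hd : ∀ t : ℝ, HasDerivAt (fun u : ℝ => ‖NormedSpace.exp (u • B) f‖ ^ 2)
      (2 * inner ℝ (NormedSpace.exp (t • B) f) (NormedSpace.exp (t • B) (B f))) t := fun t => (hasDeriv_exp B f t).norm_sq
  have hanti : Antitone (fun u : ℝ => ‖NormedSpace.exp (u • B) f‖ ^ 2) := by
    apply antitone_of_hasDerivAt_nonpos hd
    intro s
    beta_reduce
    rw [hcomm]
    have := hB (NormedSpace.exp (s • B) f)
    have h2 : inner ℝ (NormedSpace.exp (s • B) f) (B (NormedSpace.exp (s • B) f)) = (inner ℂ (NormedSpace.exp (s • B) f) (B (NormedSpace.exp (s • B) f))).re := rfl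
    simp only [Pi.zero_apply]
    rw [h2]; linarith
  have := hanti ht
  simp only [zero_smul, NormedSpace.exp_zero] at this
  exact le_of_sq_le_sq this (norm_nonneg _) 

theorem exp_diff (B C : H →L[ℂ] H) (hB : ∀ v, (inner ℂ v (B v)).re ≤ 0)
    (hC : ∀ v, (inner ℂ v (C v)).re ≤ 0) (hBC : Commute B C) (t : ℝ) (ht : 0 ≤ t) (f : H) :
    ‖NormedSpace.exp (t • B) f - NormedSpace.exp (t • C) f‖ ≤ t * ‖B f - C f‖ := by
  let _ : NormedAlgebra ℚ (H →L[ℂ] H) := NormedAlgebra.restrictScalars ℚ ℝ _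
  have key : ∀ s : ℝ, NormedSpace.exp (t • C) * NormedSpace.exp (s • (B - C)) = NormedSpace.exp (s • B) * NormedSpace.exp ((t - s) • C) := by
    intro s
    rw [← NormedSpace.exp_add_of_commute, ← NormedSpace.exp_add_of_commute]
    · congr 1
      module
    · exact (hBC.smul_left _).smul_right _
    · exact ((hBC.symm.sub_right (Commute.refl C)).smul_right _).smul_left _
  have hd : ∀ s : ℝ, HasDerivAt (fun u : ℝ => NormedSpace.exp (t • C) (NormedSpace.exp (u • (B - C)) f))
      (NormedSpace.exp (t • C) (NormedSpace.exp (s • (B - C)) ((B - C) f))) s := fun s => by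
    have := ((NormedSpace.exp (t • C)).restrictScalars ℝ).hasFDerivAt.comp_hasDerivAt s (hasDeriv_exp (B - C) f s)
    simpa [Function.comp_def] using this
  have h := norm_image_sub_le_of_norm_deriv_le_segment' (a := 0) (b := t) (C := ‖B f - C f‖)
    (fun s _ => (hd s).hasDerivWithinAt) (fun s hs => by
      have e : NormedSpace.exp (t • C) (NormedSpace.exp (s • (B - C)) ((B - C) f)) = NormedSpace.exp (s • B) (NormedSpace.exp ((t - s) • C) ((B - C) f)) :=
        DFunLike.congr_fun (key s) _
      rw [e]
      refine (exp_contr B hB s hs.1 _).trans ((exp_contr C hC _ (by linarith [hs.2]) _).trans ?_)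
      simp) t ⟨ht, le_rfl⟩
  have e1 : NormedSpace.exp (t • C) (NormedSpace.exp (t • (B - C)) f) = NormedSpace.exp (t • B) f := by
    have := DFunLike.congr_fun (key t) f
    simpa using this
  simp only [zero_smul, NormedSpace.exp_zero, e1, sub_zero] at h
  rw [mul_comm]; exact h

theorem exp_lip (B : H →L[ℂ] H) (hB : ∀ v, (inner ℂ v (B v)).re ≤ 0) (s t : ℝ) (hs : 0 ≤ s)
    (ht : s ≤ t) (f : H) : ‖NormedSpace.exp (t • B) f - NormedSpace.exp (s • B) f‖ ≤ (t - s) * ‖B f‖ := by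
  have h := norm_image_sub_le_of_norm_deriv_le_segment' (a := s) (b := t) (C := ‖B f‖)
    (fun u _ => (hasDeriv_exp B f u).hasDerivWithinAt) (fun u hu => exp_contr B hB u (hs.trans hu.1) _)
    t ⟨ht, le_rfl⟩
  rw [mul_comm]; exact h

/-- first order Taylor bound -/
theorem exp_taylor (B : H →L[ℂ] H) (hB : ∀ v, (inner ℂ v (B v)).re ≤ 0) (t : ℝ) (ht : 0 ≤ t)
    (f g : H) (c : ℝ) (hc : ∀ s, 0 ≤ s → s ≤ t → ‖NormedSpace.exp (s • B) g - g‖ ≤ c) :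
    ‖NormedSpace.exp (t • B) f - f - t • g‖ ≤ (‖B f - g‖ + c) * t := by
  have hd : ∀ s : ℝ, HasDerivAt (fun u : ℝ => NormedSpace.exp (u • B) f - u • g) (NormedSpace.exp (s • B) (B f) - g) s := by
    intro s
    have := (hasDeriv_exp B f s).sub ((hasDerivAt_id s).smul_const g)
    simp only [one_smul] at this
    exact this
  have h := norm_image_sub_le_of_norm_deriv_le_segment' (a := 0) (b := t) (C := ‖B f - g‖ + c)
    (fun u _ => (hd u).hasDerivWithinAt) (fun u hu => by
      have : NormedSpace.exp (u • B) (B f) - g = NormedSpace.exp (u • B) (B f - g) + (NormedSpace.exp (u • B) g - g) := by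
        simp
      rw [this]
      exact (norm_add_le _ _).trans (add_le_add (exp_contr B hB u hu.1 _) (hc u hu.1 hu.2.le)))
    t ⟨ht, le_rfl⟩
  simp only [zero_smul, NormedSpace.exp_zero, sub_zero] at h
  convert h using 2
  simp; abel

theorem diss_bound (G : Submodule ℂ (H × H)) (hd : ∀ f g, (f, g) ∈ G → (inner ℂ f g).re ≤ 0)
    (l : ℝ) (f g : H) (h : (f, g) ∈ G) : l * ‖f‖ ≤ ‖(l : ℂ) • f - g‖ := by
  rcases eq_or_ne f 0 with rfl | hf
  · simp
  have hf' : 0 < ‖f‖ := norm_pos_iff.2 hf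
  have h1 : (inner ℂ f ((l : ℂ) • f - g)).re ≤ ‖f‖ * ‖(l : ℂ) • f - g‖ := by
    refine (Complex.re_le_norm _).trans (norm_inner_le_norm _ _)
  rw [inner_sub_right, inner_smul_right, inner_self_eq_norm_sq_to_K] at h1
  have h2 := hd f g h
  have h3 : ((l : ℂ) * ((‖f‖ : ℝ) : ℂ) ^ 2 - inner ℂ f g).re = l * ‖f‖ ^ 2 - (inner ℂ f g).re := by
    rw [← Complex.ofReal_pow, ← Complex.ofReal_mul]; simp [-Complex.ofReal_mul, -Complex.ofReal_pow]
  have h4 : l * ‖f‖ ^ 2 - (inner ℂ f g).re ≤ ‖f‖ * ‖(l : ℂ) • f - g‖ := by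
    rw [← h3]; exact h1
  nlinarith

theorem exists_resolvent (G : Submodule ℂ (H × H)) (hd : ∀ f g, (f, g) ∈ G → (inner ℂ f g).re ≤ 0)
    (l : ℝ) (hl : 0 < l) (hs : ∀ v, ∃ f g, (f, g) ∈ G ∧ (l : ℂ) • f - g = v) :
    ∃ R : H →L[ℂ] H, (∀ v, (R v, (l : ℂ) • R v - v) ∈ G) ∧ (∀ v, l * ‖R v‖ ≤ ‖v‖) ∧
      ∀ f g, (f, g) ∈ G → R ((l : ℂ) • f - g) = f := by
  have uniq : ∀ f g f' g', (f, g) ∈ G → (f', g') ∈ G → (l : ℂ) • f - g = (l : ℂ) • f' - g' → f = f' := by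
    intro f g f' g' h h' e
    have := diss_bound G hd l _ _ (G.sub_mem h h')
    have e2 : (l : ℂ) • (f - f') - (g - g') = 0 := by
      rw [smul_sub, sub_sub_sub_comm, e, sub_self]
    simp only at this
    rw [e2, norm_zero] at this
    have : ‖f - f'‖ ≤ 0 := by
      by_contra hh
      push Not at hh
      nlinarith
    exact sub_eq_zero.1 (norm_le_zero_iff.1 this)
  choose R g hG hR using hs
  let R0 : H →ₗ[ℂ] H :=
    { toFun := R
      map_add' := fun v w => uniq _ _ _ _ (hG (v + w)) (G.add_mem (hG v) (hG w)) (by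
        rw [hR]; simp only; rw [smul_add, add_sub_add_comm, hR, hR])
      map_smul' := fun c v => uniq _ _ _ _ (hG (c • v)) (G.smul_mem c (hG v)) (by
        rw [hR]; simp only [RingHom.id_apply]; rw [smul_comm, ← smul_sub, hR]) }
  have hb : ∀ v, l * ‖R v‖ ≤ ‖v‖ := fun v => by
    have := diss_bound G hd l _ _ (hG v)
    rwa [hR] at this
  refine ⟨R0.mkContinuous l⁻¹ fun v => ?_, fun v => ?_, hb, fun f g' h => ?_⟩
  · rw [← div_eq_inv_mul, le_div_iff₀ hl, mul_comm]; exact hb v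
  · change (R v, (l : ℂ) • R v - v) ∈ G
    have : (l : ℂ) • R v - v = g v := by
      nth_rewrite 2 [← hR v]; abel
    rw [this]; exact hG v
  · exact uniq _ _ _ _ (hG _) h (hR _)

theorem hille_yosida (G : Submodule ℂ (H × H)) (hd : ∀ f g, (f, g) ∈ G → (inner ℂ f g).re ≤ 0)
    (hs : ∀ l : ℝ, 0 < l → ∀ v, ∃ f g, (f, g) ∈ G ∧ (l : ℂ) • f - g = v)
    (hsv : ∀ g, (0, g) ∈ G → g = 0) :
    ∃ T : ℝ → H →L[ℂ] H,
      T 0 = ContinuousLinearMap.id ℂ _ ∧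
      (∀ s t : ℝ, 0 ≤ s → 0 ≤ t → T (s + t) = (T s).comp (T t)) ∧
      (∀ t : ℝ, 0 ≤ t → ‖T t‖ ≤ 1) ∧
      (∀ f : H, ContinuousOn (fun t => T t f) (Set.Ici 0)) ∧
      (∀ f g : H, (f, g) ∈ G ↔
          Filter.Tendsto (fun t : ℝ => (t⁻¹ : ℝ) • (T t f - f))
            (nhdsWithin 0 (Set.Ioi 0)) (nhds g)) := by
  -- density of the domain
  have hdense : Dense {f : H | ∃ g, (f, g) ∈ G} := by
    have h1 : Dense ((G.map (LinearMap.fst ℂ H H) : Submodule ℂ H) : Set H) := by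
      rw [Submodule.dense_iff_topologicalClosure_eq_top, Submodule.topologicalClosure_eq_top_iff,
        Submodule.eq_bot_iff]
      intro v hv
      obtain ⟨f, g, hfg, e⟩ := hs 1 one_pos v
      have h0 : inner ℂ f v = 0 := (Submodule.mem_orthogonal _ _).1 hv f
        (Submodule.mem_map.2 ⟨(f, g), hfg, rfl⟩)
      have hb := hd f g hfg
      rw [← e] at h0
      simp only [Complex.ofReal_one, one_smul, inner_sub_right] at h0
      have h2 : ‖f‖ ^ 2 = (inner ℂ f g).re := by
        rw [← inner_self_eq_norm_sq (𝕜 := ℂ)]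
        have := congrArg Complex.re h0
        simp only [Complex.sub_re, Complex.zero_re] at this
        have h3 : RCLike.re (inner ℂ f f) = (inner ℂ f f).re := rfl
        linarith
      have hf : f = 0 := by
        have : ‖f‖ ^ 2 ≤ 0 := h2 ▸ hb
        have h4 : ‖f‖ = 0 := by nlinarith [norm_nonneg f]
        exact norm_eq_zero.1 h4
      subst hf
      rw [hsv g hfg] at e
      simpa using e.symm
    refine h1.mono ?_
    intro f hf
    obtain ⟨⟨a, b⟩, hab, rfl⟩ := Submodule.mem_map.1 hf
    exact ⟨b, hab⟩
  let l : ℕ → ℝ := fun k => (k : ℝ) + 1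
  have hl : ∀ k, 0 < l k := fun k => by positivity
  have hlt : Tendsto l atTop atTop := tendsto_atTop_add_const_right _ _ tendsto_natCast_atTop_atTop
  choose R hRG hRb hRi using fun k => exists_resolvent G hd (l k) (hl k) (hs (l k) (hl k))
  let B : ℕ → H →L[ℂ] H := fun k => (l k : ℂ) • ((l k : ℂ) • R k - 1)
  have hlR : ∀ k v, ‖(l k : ℂ) • R k v‖ ≤ ‖v‖ := fun k v => by
    rw [norm_smul, Complex.norm_real, Real.norm_of_nonneg (hl k).le]; exact hRb k v
  have hBd : ∀ k v, (inner ℂ v (B k v)).re ≤ 0 := by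
    intro k v
    have h1 : (inner ℂ v ((l k : ℂ) • R k v)).re ≤ ‖v‖ * ‖v‖ :=
      (Complex.re_le_norm _).trans ((norm_inner_le_norm _ _).trans
        (mul_le_mul_of_nonneg_left (hlR k v) (norm_nonneg _)))
    have h3 : (inner ℂ v v).re = ‖v‖ ^ 2 := inner_self_eq_norm_sq (𝕜 := ℂ) v
    have e : inner ℂ v (B k v) = (l k : ℂ) * (inner ℂ v ((l k : ℂ) • R k v) - inner ℂ v v) := by
      simp only [B, ContinuousLinearMap.smul_apply, ContinuousLinearMap.sub_apply,
        ContinuousLinearMap.one_apply]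
      rw [inner_smul_right, inner_sub_right]
    rw [e, Complex.re_ofReal_mul, Complex.sub_re, h3]
    have := hl k
    nlinarith
  have hRcomm : ∀ j k, Commute (R j) (R k) := by
    intro j k
    have key : ∀ j k v, R k v = R j v + ((l j : ℂ) - l k) • R j (R k v) := by
      intro j k v
      have := hRi j _ _ (hRG k v)
      rw [map_sub, map_sub, map_smul, map_smul] at this
      calc R k v = _ := this.symm
        _ = _ := by module
    rcases eq_or_ne (l j) (l k) with e | e
    · have : j = k := by simpa [l] using e
      subst this; exact Commute.refl _
    · ext v
      have h1 := key j k v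
      have h2 := key k j v
      have h3 : ((l j : ℂ) - l k) • (R j (R k v) - R k (R j v)) = 0 := by
        have : R k v + R j v = R k v + R j v + ((l j : ℂ) - l k) • (R j (R k v) - R k (R j v)) := by
          nth_rewrite 1 [h1]; nth_rewrite 2 [h2]; module
        simpa using this
      rcases smul_eq_zero.1 h3 with h4 | h4
      · exact absurd (by exact_mod_cast sub_eq_zero.1 h4) e
      · exact sub_eq_zero.1 h4
  have hBcomm : ∀ j k, Commute (B j) (B k) := fun j k =>
    (((((hRcomm j k).smul_left _).sub_left (Commute.one_left _)).smul_left _).smul_right _ |>.sub_right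
      (Commute.one_right _)).smul_right _
  have hBf : ∀ k f g, (f, g) ∈ G → B k f = (l k : ℂ) • R k g := by
    intro k f g h
    have := hRi k f g h
    rw [map_sub, map_smul] at this
    simp only [B, ContinuousLinearMap.smul_apply, ContinuousLinearMap.sub_apply,
        ContinuousLinearMap.one_apply]
    congr 1
    nth_rewrite 2 [← this]; abel
  have hlR_tend : ∀ v, Tendsto (fun k => (l k : ℂ) • R k v) atTop (𝓝 v) := by
    intro v
    rw [Metric.tendsto_atTop]
    intro ε hε
    obtain ⟨f, hf, ⟨g, hfg⟩⟩ := Metric.dense_iff.1 hdense v (ε / 3) (by positivity)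
    rw [Metric.mem_ball, dist_eq_norm] at hf
    obtain ⟨N, hN⟩ := eventually_atTop.1 (hlt.eventually_gt_atTop (‖g‖ / (ε / 3)))
    refine ⟨N, fun k hk => ?_⟩
    have h1 := hN k hk
    rw [div_lt_iff₀ (by positivity)] at h1
    have h2 : ‖(l k : ℂ) • R k f - f‖ < ε / 3 := by
      have := hRi k f g hfg
      rw [map_sub, map_smul] at this
      have e : (l k : ℂ) • R k f - f = R k g := by nth_rewrite 2 [← this]; abel
      rw [e]
      have h3 := hRb k g
      have h4 := hl k
      by_contra hh
      push Not at hh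
      nlinarith
    rw [dist_eq_norm]
    have e : (l k : ℂ) • R k v - v = (l k : ℂ) • R k (v - f) + ((l k : ℂ) • R k f - f) + (f - v) := by
      rw [map_sub]; module
    rw [e]
    have h5 := hlR k (v - f)
    rw [norm_sub_rev] at hf
    have h6 := norm_sub_rev f v
    refine lt_of_le_of_lt (norm_add₃_le) ?_
    linarith
  have hBtend : ∀ f g, (f, g) ∈ G → Tendsto (fun k => B k f) atTop (𝓝 g) := by
    intro f g h
    simp_rw [fun k => hBf k f g h]
    exact hlR_tend g
  have hBbd : ∀ k f g, (f, g) ∈ G → ‖B k f‖ ≤ ‖g‖ := fun k f g h => by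
    rw [hBf k f g h]; exact hlR k g
  -- Cauchy
  have hcauchy : ∀ t : ℝ, 0 ≤ t → ∀ f, CauchySeq (fun k => NormedSpace.exp (t • B k) f) := by
    intro t ht f
    rw [Metric.cauchySeq_iff']
    intro ε hε
    obtain ⟨f', hf, ⟨g, hfg⟩⟩ := Metric.dense_iff.1 hdense f (ε / 4) (by positivity)
    rw [Metric.mem_ball, dist_eq_norm, norm_sub_rev] at hf
    obtain ⟨N, hN⟩ := Metric.cauchySeq_iff'.1 (hBtend f' g hfg).cauchySeq (ε / 4 / (t + 1)) (by positivity)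
    refine ⟨N, fun k hk => ?_⟩
    have h1 := exp_diff (B k) (B N) (hBd k) (hBd N) (hBcomm k N) t ht f'
    have h2 := hN k hk
    rw [dist_eq_norm, lt_div_iff₀ (by positivity)] at h2
    have e : NormedSpace.exp (t • B k) f - NormedSpace.exp (t • B N) f = NormedSpace.exp (t • B k) (f - f') +
      (NormedSpace.exp (t • B k) f' - NormedSpace.exp (t • B N) f') - NormedSpace.exp (t • B N) (f - f') := by
      simp only [map_sub]; abel
    rw [dist_eq_norm, e]
    have h3 := exp_contr (B k) (hBd k) t ht (f - f')
    have h4 := exp_contr (B N) (hBd N) t ht (f - f')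
    refine lt_of_le_of_lt (norm_sub_le _ _) ?_
    have h5 := norm_add_le (NormedSpace.exp (t • B k) (f - f')) (NormedSpace.exp (t • B k) f' - NormedSpace.exp (t • B N) f')
    have h6 := norm_nonneg (B k f' - B N f')
    nlinarith
  have hT : ∀ t : ℝ, ∃ T : H →L[ℂ] H, 0 ≤ t → ∀ f, Tendsto (fun k => NormedSpace.exp (t • B k) f) atTop (𝓝 (T f)) := by
    intro t
    by_cases ht : 0 ≤ t
    · choose T hT using fun f => cauchySeq_tendsto_of_complete (hcauchy t ht f)
      exact ⟨continuousLinearMapOfTendsto (fun k => NormedSpace.exp (t • B k)) (f := T) (tendsto_pi_nhds.2 hT), fun _ => hT⟩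
    · exact ⟨0, fun h => absurd h ht⟩
  choose T hT using hT
  have hTc : ∀ t : ℝ, 0 ≤ t → ∀ f, ‖T t f‖ ≤ ‖f‖ := fun t ht f =>
    le_of_tendsto (hT t ht f).norm (Eventually.of_forall fun k => exp_contr (B k) (hBd k) t ht f)
  have hTlip : ∀ f g, (f, g) ∈ G → ∀ s t, 0 ≤ s → s ≤ t → ‖T t f - T s f‖ ≤ (t - s) * ‖g‖ := by
    intro f g h s t hs hst
    refine le_of_tendsto ((hT t (hs.trans hst) f).sub (hT s hs f)).norm (Eventually.of_forall fun k => ?_)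
    exact (exp_lip (B k) (hBd k) s t hs hst f).trans
      (mul_le_mul_of_nonneg_left (hBbd k f g h) (by linarith))
  have hT0 : T 0 = ContinuousLinearMap.id ℂ _ := by
    ext f
    have := hT 0 le_rfl f
    simp only [zero_smul, NormedSpace.exp_zero] at this
    exact (tendsto_nhds_unique this tendsto_const_nhds)
  have hTadd : ∀ s t : ℝ, 0 ≤ s → 0 ≤ t → T (s + t) = (T s).comp (T t) := by
    intro s t hs ht
    let _ : NormedAlgebra ℚ (H →L[ℂ] H) := NormedAlgebra.restrictScalars ℚ ℝ _
    ext f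
    refine tendsto_nhds_unique (hT (s + t) (by positivity) f) ?_
    have e : ∀ k, NormedSpace.exp ((s + t) • B k) f = NormedSpace.exp (s • B k) (T t f) + NormedSpace.exp (s • B k) (NormedSpace.exp (t • B k) f - T t f) := by
      intro k
      rw [← map_add, add_sub_cancel, add_smul, NormedSpace.exp_add_of_commute]
      · rfl
      · exact ((Commute.refl (B k)).smul_left _).smul_right _
    simp_rw [e]
    have h1 : Tendsto (fun k => NormedSpace.exp (s • B k) (NormedSpace.exp (t • B k) f - T t f)) atTop (𝓝 0) := by
      refine squeeze_zero_norm (fun k => exp_contr (B k) (hBd k) s hs _) ?_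
      have := ((hT t ht f).sub_const (T t f)).norm
      simpa using this
    have := (hT s hs (T t f)).add h1
    simpa using this
  have hTcont : ∀ f : H, ContinuousOn (fun t => T t f) (Set.Ici 0) := by
    intro f
    apply continuousOn_of_uniform_approx_of_continuousOn
    intro u hu
    obtain ⟨ε, hε, hu⟩ := Metric.mem_uniformity_dist.1 hu
    obtain ⟨f', hf, ⟨g, hfg⟩⟩ := Metric.dense_iff.1 hdense f ε hε
    refine ⟨fun t => T t f', ?_, fun t ht => hu ?_⟩
    · have : LipschitzOnWith ‖g‖₊ (fun t => T t f') (Set.Ici 0) := by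
        apply LipschitzOnWith.of_dist_le_mul
        intro s hs t ht
        rw [dist_eq_norm, coe_nnnorm, Real.dist_eq]
        rcases le_total s t with h | h
        · rw [norm_sub_rev, abs_sub_comm, abs_of_nonneg (by linarith), mul_comm]
          exact hTlip f' g hfg s t hs h
        · rw [abs_of_nonneg (by linarith), mul_comm]
          exact hTlip f' g hfg t s ht h
      exact this.continuousOn
    · rw [dist_eq_norm, ← map_sub]
      rw [Metric.mem_ball, dist_comm, dist_eq_norm] at hf
      exact (hTc t ht _).trans_lt hf
  have hgen : ∀ f g : H, (f, g) ∈ G → Tendsto (fun t : ℝ => (t⁻¹ : ℝ) • (T t f - f))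
            (𝓝[>] 0) (𝓝 g) := by
    intro f g hfg
    rw [Metric.tendsto_nhds]
    intro ε hε
    obtain ⟨g', hg, ⟨w, hw⟩⟩ := Metric.dense_iff.1 hdense g (ε / 4) (by positivity)
    rw [Metric.mem_ball, dist_comm, dist_eq_norm] at hg
    have hδ : 0 < ε / 4 / (‖w‖ + 1) := by positivity
    filter_upwards [Ioo_mem_nhdsGT hδ] with t ht
    have ht0 := ht.1
    have ht1 := ht.2
    rw [lt_div_iff₀ (by positivity)] at ht1
    have hc : ∀ k s, 0 ≤ s → s ≤ t → ‖NormedSpace.exp (s • B k) g - g‖ ≤ 3 * ε / 4 := by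
      intro k s hs hst
      have e : NormedSpace.exp (s • B k) g - g = NormedSpace.exp (s • B k) (g - g') + (NormedSpace.exp (s • B k) g' - g') - (g - g') := by
        simp only [map_sub]; abel
      have h1 := exp_lip (B k) (hBd k) 0 s le_rfl hs g'
      simp only [zero_smul, NormedSpace.exp_zero, sub_zero, ContinuousLinearMap.one_apply] at h1
      have h2 := exp_contr (B k) (hBd k) s hs (g - g')
      have h3 := hBbd k g' w hw
      have h4 : s * ‖B k g'‖ ≤ t * ‖w‖ := mul_le_mul hst h3 (norm_nonneg _) ht0.le
      rw [e]
      refine (norm_sub_le _ _).trans ?_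
      have h5 := norm_add_le (NormedSpace.exp (s • B k) (g - g')) (NormedSpace.exp (s • B k) g' - g')
      nlinarith
    have hlim : ‖T t f - f - t • g‖ ≤ (0 + 3 * ε / 4) * t := by
      have h1 : Tendsto (fun k => (‖B k f - g‖ + 3 * ε / 4) * t) atTop (𝓝 ((0 + 3 * ε / 4) * t)) := by
        refine Tendsto.mul_const _ (Tendsto.add_const _ ?_)
        have := ((hBtend f g hfg).sub_const g).norm
        simpa using this
      refine le_of_tendsto_of_tendsto (((hT t ht0.le f).sub_const f).sub_const (t • g)).norm h1
        (Eventually.of_forall fun k => exp_taylor (B k) (hBd k) t ht0.le f g _ (hc k))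
    rw [dist_eq_norm]
    have e : t⁻¹ • (T t f - f) - g = t⁻¹ • (T t f - f - t • g) := by
      rw [smul_sub _ _ (t • g), smul_smul, inv_mul_cancel₀ ht0.ne', one_smul]
    rw [e, norm_smul, norm_inv, Real.norm_of_nonneg ht0.le, inv_mul_lt_iff₀ ht0]
    nlinarith
  refine ⟨T, hT0, hTadd, fun t ht => ContinuousLinearMap.opNorm_le_bound _ zero_le_one
    (by simpa using hTc t ht), hTcont, fun f g => ⟨hgen f g, fun h => ?_⟩⟩
  obtain ⟨f', g', hfg, e⟩ := hs 1 one_pos (f - g)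
  simp only [Complex.ofReal_one, one_smul] at e
  have h2 := h.sub (hgen f' g' hfg)
  have e2 : g - g' = f - f' := by
    have : g - g' = (f' - g') - (f - g) + (f - f') := by abel
    rw [this, e, sub_self, zero_add]
  have h3 : Tendsto (fun t : ℝ => (inner ℂ (f - f') (t⁻¹ • (T t (f - f') - (f - f')))).re) (𝓝[>] 0)
      (𝓝 (inner ℂ (f - f') (f - f')).re) := by
    refine (Complex.continuous_re.tendsto _).comp (Tendsto.inner tendsto_const_nhds ?_)
    rw [e2] at h2
    refine h2.congr fun t => ?_
    rw [← smul_sub, map_sub]; congr 1; abel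
  have h4 : (inner ℂ (f - f') (f - f')).re ≤ 0 := by
    refine le_of_tendsto h3 ?_
    filter_upwards [self_mem_nhdsWithin] with t ht
    have ht' : 0 < t := ht
    have h5 : (inner ℂ (f - f') (T t (f - f'))).re ≤ ‖f - f'‖ * ‖f - f'‖ :=
      (Complex.re_le_norm _).trans ((norm_inner_le_norm _ _).trans
        (mul_le_mul_of_nonneg_left (hTc t ht'.le _) (norm_nonneg _)))
    have h6 : (inner ℂ (f - f') (f - f')).re = ‖f - f'‖ ^ 2 := inner_self_eq_norm_sq (𝕜 := ℂ) _
    rw [← Complex.coe_smul, inner_smul_right, inner_sub_right, Complex.re_ofReal_mul, Complex.sub_re, h6]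
    have : 0 < t⁻¹ := by positivity
    nlinarith
  have h6 : (inner ℂ (f - f') (f - f')).re = ‖f - f'‖ ^ 2 := inner_self_eq_norm_sq (𝕜 := ℂ) _
  have h7 : ‖f - f'‖ = 0 := by nlinarith [norm_nonneg (f - f')]
  have h8 : f - f' = 0 := norm_eq_zero.1 h7
  rw [h8] at e2
  rw [sub_eq_zero.1 h8, sub_eq_zero.1 e2]
  exact hfg

end HY

namespace TW
open MeasureTheory Filter Topology
open scoped ENNReal

variable {E : Type*} [NormedAddCommGroup E] [NormedSpace ℝ E]

/-- twisted derivative in direction `w` -/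
noncomputable def V (ω : E →L[ℝ] E →L[ℝ] ℝ) (w : E) (f : E → ℂ) (p : E) : ℂ :=
  fderiv ℝ f p w + Complex.I * (ω p w : ℂ) * f p

/-- test functions -/
def Sm (f : E → ℂ) : Prop := ContDiff ℝ (⊤ : ℕ∞) f ∧ HasCompactSupport f

theorem Sm.V {f : E → ℂ} (hf : Sm f) (ω : E →L[ℝ] E →L[ℝ] ℝ) (w : E) : Sm (V ω w f) := by
  constructor
  · have h1 : ContDiff ℝ (⊤ : ℕ∞) (fun p => fderiv ℝ f p w) :=
      (hf.1.fderiv_right (m := (⊤ : ℕ∞)) (by simp)).clm_apply contDiff_const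
    have h2 : ContDiff ℝ (⊤ : ℕ∞) (fun p => (ω p w : ℂ)) :=
      Complex.ofRealCLM.contDiff.comp (ω.contDiff.clm_apply contDiff_const)
    exact h1.add ((contDiff_const.mul h2).mul hf.1)
  · exact (hf.2.fderiv_apply (𝕜 := ℝ) w).add (hf.2.mul_left)

theorem Sm.add {f g : E → ℂ} (hf : Sm f) (hg : Sm g) : Sm (fun p => f p + g p) :=
  ⟨hf.1.add hg.1, hf.2.add hg.2⟩

theorem Sm.sub {f g : E → ℂ} (hf : Sm f) (hg : Sm g) : Sm (fun p => f p - g p) :=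
  ⟨hf.1.sub hg.1, hf.2.sub hg.2⟩

theorem Sm.cmul {f : E → ℂ} (hf : Sm f) (c : ℂ) : Sm (fun p => c * f p) :=
  ⟨contDiff_const.mul hf.1, hf.2.mul_left⟩

theorem Sm.zero : Sm (fun _ : E => (0 : ℂ)) := ⟨contDiff_const, HasCompactSupport.zero⟩

theorem Sm.sum {ι : Type*} (s : Finset ι) {f : ι → E → ℂ} (hf : ∀ i, Sm (f i)) :
    Sm (fun p => ∑ i ∈ s, f i p) := by
  classical
  induction s using Finset.induction_on with
  | empty => simpa using Sm.zero
  | insert a s ha ih => simp_rw [Finset.sum_insert ha]; exact (hf a).add ih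

theorem Sm.conj {f : E → ℂ} (hf : Sm f) : Sm (fun p => (starRingEnd ℂ) (f p)) :=
  ⟨Complex.conjCLE.contDiff.comp hf.1, hf.2.comp_left (g := starRingEnd ℂ) (map_zero _)⟩

theorem Sm.diff {f : E → ℂ} (hf : Sm f) : Differentiable ℝ f := hf.1.differentiable (by simp)

/-- the twisted kernel -/
noncomputable def K (ω : E →L[ℝ] E →L[ℝ] ℝ) (p : E) (ψ : E → ℂ) (q : E) : ℂ :=
  ψ (p - q) * Complex.exp (Complex.I * (ω p q : ℂ))

theorem Sm.K {ψ : E → ℂ} (hf : Sm ψ) (ω : E →L[ℝ] E →L[ℝ] ℝ) (p : E) : Sm (K ω p ψ) := by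
  constructor
  · have h1 : ContDiff ℝ (⊤ : ℕ∞) (fun q => ψ (p - q)) := hf.1.comp (contDiff_const.sub contDiff_id)
    have h2 : ContDiff ℝ (⊤ : ℕ∞) (fun q => (ω p q : ℂ)) :=
      Complex.ofRealCLM.contDiff.comp (ω p).contDiff
    exact h1.mul (contDiff_const.mul h2).cexp
  · exact HasCompactSupport.mul_right (hf.2.comp_homeomorph (Homeomorph.subLeft p))

theorem V_K {ψ : E → ℂ} (hf : Sm ψ) (ω : E →L[ℝ] E →L[ℝ] ℝ) (p w : E) :
    V (-ω) w (K ω p ψ) = fun q => - K ω p (V (-ω) w ψ) q := by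
  ext q
  have h1 : HasFDerivAt (fun q => ψ (p - q)) ((fderiv ℝ ψ (p - q)).comp (-ContinuousLinearMap.id ℝ E)) q :=
    (hf.diff (p - q)).hasFDerivAt.comp q ((hasFDerivAt_id q).const_sub p)
  have h2 : HasFDerivAt (fun q => (ω p q : ℂ)) (Complex.ofRealCLM.comp (ω p)) q :=
    Complex.ofRealCLM.hasFDerivAt.comp q (ω p).hasFDerivAt
  have h3 := h1.mul (h2.const_mul Complex.I).cexp
  have h4 : fderiv ℝ (K ω p ψ) q = _ := h3.fderiv
  simp only [V, h4, K]
  simp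
  ring

variable [MeasurableSpace E] [BorelSpace E] [FiniteDimensional ℝ E] (ν : Measure E)

/-- twisted convolution -/
noncomputable def F (ω : E →L[ℝ] E →L[ℝ] ℝ) (f ψ : E → ℂ) (p : E) : ℂ := ∫ q, f q * K ω p ψ q ∂ν

theorem norm_expI (x : ℝ) : ‖Complex.exp (Complex.I * (x : ℂ))‖ = 1 := by
  rw [mul_comm]; exact Complex.norm_exp_ofReal_mul_I x

theorem norm_K (ω : E →L[ℝ] E →L[ℝ] ℝ) (p : E) (ψ : E → ℂ) (q : E) : ‖K ω p ψ q‖ = ‖ψ (p - q)‖ := by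
  simp [K, norm_expI]

theorem integrable_mul_cs [IsLocallyFiniteMeasure ν] {f ψ : E → ℂ} (hf : LocallyIntegrable f ν)
    (hψ : Continuous ψ) (hc : HasCompactSupport ψ) : Integrable (fun q => f q * ψ q) ν := by
  have := hf.integrable_smul_left_of_hasCompactSupport hψ hc
  simpa [mul_comm] using this

theorem F_lineDeriv [IsLocallyFiniteMeasure ν] {ω : E →L[ℝ] E →L[ℝ] ℝ} (hω : ∀ v w, ω v w = - ω w v) {f ψ : E → ℂ}
    (hf : LocallyIntegrable f ν) (hψ : Sm ψ) (p w : E) :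
    HasLineDerivAt ℝ (F ν ω f ψ) (F ν ω f (V ω w ψ) p - Complex.I * (ω p w : ℂ) * F ν ω f ψ p) p w := by
  -- derivative of the kernel along the line
  let D : ℝ → E → ℂ := fun t q => K ω (p + t • w) (V ω w ψ) q
    - Complex.I * (ω (p + t • w) w : ℂ) * K ω (p + t • w) ψ q
  have hVs := hψ.V ω w
  have hD : ∀ q t, HasDerivAt (fun s : ℝ => K ω (p + s • w) ψ q) (D t q) t := by
    intro q t
    have h0 : HasDerivAt (fun s : ℝ => p + s • w - q) w t := by
      simpa using (((hasDerivAt_id t).smul_const w).const_add p).sub_const q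
    have h1 := (hψ.diff (p + t • w - q)).hasFDerivAt.comp_hasDerivAt t h0
    have h2 : HasDerivAt (fun s : ℝ => (ω (p + s • w) q : ℂ)) ((ω w q : ℂ)) t := by
      have h4 : HasDerivAt (fun s : ℝ => ω (p + s • w) q) (ω w q) t := by
        have e : (fun s : ℝ => ω (p + s • w) q) = fun s : ℝ => ω p q + s * ω w q := by ext s; simp
        rw [e]
        simpa using ((hasDerivAt_id t).mul_const (ω w q)).const_add (ω p q)
      exact h4.ofReal_comp
    have h3 := h1.mul (h2.const_mul Complex.I).cexp
    refine h3.congr_deriv ?_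
    simp only [D, K, V]
    rw [hω w q]
    simp
    ring
  have hKc : ∀ χ : E → ℂ, Continuous χ → Continuous (fun z : ℝ × E => K ω (p + z.1 • w) χ z.2) := by
    intro χ hχ
    have h1 : Continuous (fun z : ℝ × E => ω (p + z.1 • w) z.2) := by fun_prop
    have h2 : Continuous (fun z : ℝ × E => (p + z.1 • w) - z.2) := by fun_prop
    exact (hχ.comp h2).mul (Complex.continuous_exp.comp
      (continuous_const.mul (Complex.continuous_ofReal.comp h1)))
  have hDc : Continuous (fun z : ℝ × E => D z.1 z.2) := by
    have h1 : Continuous (fun z : ℝ × E => ω (p + z.1 • w) w) := by fun_prop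
    exact (hKc _ hVs.1.continuous).sub ((continuous_const.mul (Complex.continuous_ofReal.comp h1)).mul
      (hKc _ hψ.1.continuous))
  let S : Set E := (fun z : ℝ × E => p + z.1 • w - z.2) '' (Set.Icc (-1) 1 ×ˢ (tsupport ψ ∪ tsupport (V ω w ψ)))
  have hS : IsCompact S :=
    (isCompact_Icc.prod (hψ.2.isCompact.union hVs.2.isCompact)).image (by fun_prop)
  obtain ⟨C, hC⟩ := (isCompact_Icc.prod hS).exists_bound_of_continuousOn hDc.continuousOn
    (s := Set.Icc (-1 : ℝ) 1 ×ˢ S)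
  have hDz : ∀ t ∈ Set.Icc (-1 : ℝ) 1, ∀ q, q ∉ S → D t q = 0 := by
    intro t ht q hq
    have h1 : p + t • w - q ∉ tsupport ψ ∪ tsupport (V ω w ψ) := by
      intro h
      exact hq ⟨(t, p + t • w - q), ⟨ht, h⟩, by simp⟩
    rw [Set.mem_union, not_or] at h1
    simp [D, K, image_eq_zero_of_notMem_tsupport h1.1, image_eq_zero_of_notMem_tsupport h1.2]
  have hKi : ∀ (p : E) (χ : E → ℂ), Sm χ → Integrable (fun q => f q * K ω p χ q) ν := fun p χ hχ =>
    integrable_mul_cs ν hf (hχ.K ω p).1.continuous (hχ.K ω p).2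
  have hmain := hasDerivAt_integral_of_dominated_loc_of_deriv_le (μ := ν) (x₀ := (0 : ℝ))
    (F := fun t q => f q * K ω (p + t • w) ψ q) (F' := fun t q => f q * D t q)
    (s := Set.Icc (-1) 1) (bound := S.indicator fun q => ‖f q‖ * C)
    (Icc_mem_nhds (by norm_num) (by norm_num))
    (Eventually.of_forall fun t => (hKi _ ψ hψ).aestronglyMeasurable) (hKi _ ψ hψ)
    (hf.aestronglyMeasurable.mul (hDc.comp (continuous_const.prodMk continuous_id)).aestronglyMeasurable)
    (Eventually.of_forall fun q t ht => by
      by_cases hq : q ∈ S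
      · rw [Set.indicator_of_mem hq, norm_mul]
        exact mul_le_mul_of_nonneg_left (hC (t, q) ⟨ht, hq⟩) (norm_nonneg _)
      · rw [Set.indicator_of_notMem hq, hDz t ht q hq]; simp)
    ((integrable_indicator_iff hS.measurableSet).2 ((hf.integrableOn_isCompact hS).norm.mul_const C))
    (Eventually.of_forall fun q t _ => (hD q t).const_mul (f q))
  have h2 := hmain.2
  unfold HasLineDerivAt
  refine h2.congr_deriv ?_
  have e : ∀ q, f q * D 0 q = f q * K ω p (V ω w ψ) q - Complex.I * (ω p w : ℂ) * (f q * K ω p ψ q) := by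
    intro q; simp [D]; ring
  simp_rw [e]
  rw [integral_sub (hKi _ _ hVs) ((hKi _ _ hψ).const_mul _), integral_const_mul]
  rfl

theorem lint_cs (a b : E → ℝ≥0∞) (ha : Measurable a) (hb : Measurable b) :
    (∫⁻ q, a q * b q ∂ν) ^ (2 : ℝ) ≤ (∫⁻ q, b q ∂ν) * ∫⁻ q, a q ^ (2 : ℝ) * b q ∂ν := by
  have h := ENNReal.lintegral_mul_le_Lp_mul_Lq ν (p := 2) (q := 2)
    (by norm_num [Real.holderConjugate_iff])
    (f := fun q => b q ^ (1 / 2 : ℝ)) (g := fun q => a q * b q ^ (1 / 2 : ℝ))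
    (by fun_prop) (by fun_prop)
  have e1 : ∀ x : ℝ≥0∞, x ^ (1 / 2 : ℝ) * x ^ (1 / 2 : ℝ) = x := fun x => by
    rw [← ENNReal.rpow_add_of_nonneg _ _ (by norm_num) (by norm_num)]; norm_num
  have e2 : ∀ x : ℝ≥0∞, (x ^ (1 / 2 : ℝ)) ^ (2 : ℝ) = x := fun x => by
    rw [← ENNReal.rpow_mul]; norm_num
  have e3 : ∀ q, ((fun q => b q ^ (1 / 2 : ℝ)) * (fun q => a q * b q ^ (1 / 2 : ℝ))) q = a q * b q := by
    intro q
    simp only [Pi.mul_apply]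
    rw [mul_left_comm, e1]
  simp_rw [e3, ENNReal.mul_rpow_of_nonneg _ _ (zero_le_two (α := ℝ)), e2] at h
  calc _ ≤ _ := ENNReal.rpow_le_rpow h zero_le_two
    _ = _ := by rw [ENNReal.mul_rpow_of_nonneg _ _ (zero_le_two (α := ℝ)), e2, e2]

theorem F_congr (ω : E →L[ℝ] E →L[ℝ] ℝ) {f f' : E → ℂ} (h : f =ᵐ[ν] f') (ψ : E → ℂ) :
    F ν ω f ψ = F ν ω f' ψ := by
  ext p
  exact integral_congr_ae (h.mono fun q hq => by simp [hq])

theorem F_meas [SFinite ν] (ω : E →L[ℝ] E →L[ℝ] ℝ) {f ψ : E → ℂ} (hf : AEStronglyMeasurable f ν)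
    (hψ : Continuous ψ) : StronglyMeasurable (F ν ω f ψ) := by
  rw [F_congr ν ω hf.ae_eq_mk]
  have h1 : Continuous (fun z : E × E => K ω z.1 ψ z.2) := by
    have h1 : Continuous (fun z : E × E => ω z.1 z.2) := by fun_prop
    have h2 : Continuous (fun z : E × E => z.1 - z.2) := by fun_prop
    exact (hψ.comp h2).mul (Complex.continuous_exp.comp
      (continuous_const.mul (Complex.continuous_ofReal.comp h1)))
  have h2 : StronglyMeasurable (fun z : E × E => hf.mk f z.2 * K ω z.1 ψ z.2) :=
    (hf.stronglyMeasurable_mk.comp_measurable measurable_snd).mul h1.stronglyMeasurable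
  exact h2.integral_prod_right

theorem F_L2 [ν.IsAddHaarMeasure] (ω : E →L[ℝ] E →L[ℝ] ℝ) {f ψ : E → ℂ} (hf : AEStronglyMeasurable f ν)
    (hψ : Continuous ψ) : eLpNorm (F ν ω f ψ) 2 ν ≤ (∫⁻ q, ‖ψ q‖ₑ ∂ν) * eLpNorm f 2 ν := by
  wlog hfm : StronglyMeasurable f generalizing f
  · rw [F_congr ν ω hf.ae_eq_mk, eLpNorm_congr_ae hf.ae_eq_mk]
    exact this hf.stronglyMeasurable_mk.aestronglyMeasurable hf.stronglyMeasurable_mk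
  have hfe : Measurable (fun q => ‖f q‖ₑ) := hfm.enorm
  have hψe : Measurable (fun q => ‖ψ q‖ₑ) := hψ.stronglyMeasurable.enorm
  have hb : ∀ p, ‖F ν ω f ψ p‖ₑ ^ (2 : ℝ) ≤
      (∫⁻ q, ‖ψ q‖ₑ ∂ν) * ∫⁻ q, ‖f q‖ₑ ^ (2 : ℝ) * ‖ψ (p - q)‖ₑ ∂ν := by
    intro p
    have h1 : ‖F ν ω f ψ p‖ₑ ≤ ∫⁻ q, ‖f q‖ₑ * ‖ψ (p - q)‖ₑ ∂ν := by
      refine (enorm_integral_le_lintegral_enorm _).trans_eq ?_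
      congr 1; ext q
      rw [enorm_mul]; congr 1
      rw [← ofReal_norm, norm_K, ofReal_norm]
    refine (ENNReal.rpow_le_rpow h1 zero_le_two).trans ?_
    refine (lint_cs ν _ _ hfe (hψe.comp (measurable_const.sub measurable_id))).trans_eq ?_
    congr 1
    exact lintegral_sub_left_eq_self (fun q => ‖ψ q‖ₑ) p
  have hI : ∫⁻ p, ‖F ν ω f ψ p‖ₑ ^ (2 : ℝ) ∂ν ≤ ((∫⁻ q, ‖ψ q‖ₑ ∂ν) ^ (2 : ℝ)) * ∫⁻ q, ‖f q‖ₑ ^ (2 : ℝ) ∂ν := by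
    refine (lintegral_mono hb).trans ?_
    have hm : Measurable (Function.uncurry fun p q => ‖f q‖ₑ ^ (2 : ℝ) * ‖ψ (p - q)‖ₑ) := by
      have h1 : Measurable (fun z : E × E => ‖ψ (z.1 - z.2)‖ₑ) :=
        hψe.comp (measurable_fst.sub measurable_snd)
      exact ((hfe.comp measurable_snd).pow_const _).mul h1
    rw [lintegral_const_mul _ hm.lintegral_prod_right, lintegral_lintegral_swap hm.aemeasurable]
    have : ∀ q, ∫⁻ p, ‖f q‖ₑ ^ (2 : ℝ) * ‖ψ (p - q)‖ₑ ∂ν = ‖f q‖ₑ ^ (2 : ℝ) * ∫⁻ q, ‖ψ q‖ₑ ∂ν := by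
      intro q
      have hm1 : Measurable fun p => ‖ψ (p - q)‖ₑ := hψe.comp (measurable_id.sub_const q)
      rw [lintegral_const_mul _ hm1]
      congr 1
      exact lintegral_sub_right_eq_self (fun q => ‖ψ q‖ₑ) q
    simp_rw [this]
    rw [lintegral_mul_const _ (hfe.pow_const _), show ((2 : ℝ)) = ((2 : ℕ) : ℝ) by norm_num, ENNReal.rpow_natCast]
    apply le_of_eq; ring
  have e := fun g : E → ℂ => eLpNorm_eq_lintegral_rpow_enorm_toReal (μ := ν) (f := g)
    (two_ne_zero (α := ℝ≥0∞)) ENNReal.ofNat_ne_top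
  rw [e, e]
  simp only [ENNReal.toReal_ofNat]
  refine (ENNReal.rpow_le_rpow hI (by norm_num)).trans_eq ?_
  rw [ENNReal.mul_rpow_of_nonneg _ _ (by norm_num), ← ENNReal.rpow_mul]
  norm_num

theorem lint_ne_top [IsFiniteMeasureOnCompacts ν] {ψ : E → ℂ} (hψ : Continuous ψ) (hc : HasCompactSupport ψ) :
    ∫⁻ q, ‖ψ q‖ₑ ∂ν ≠ ⊤ := (hψ.integrable_of_hasCompactSupport hc).2.ne

theorem F_memLp [ν.IsAddHaarMeasure] (ω : E →L[ℝ] E →L[ℝ] ℝ) {f ψ : E → ℂ} (hf : MemLp f 2 ν)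
    (hψ : Sm ψ) : MemLp (F ν ω f ψ) 2 ν :=
  ⟨(F_meas ν ω hf.1 hψ.1.continuous).aestronglyMeasurable,
    (F_L2 ν ω hf.1 hψ.1.continuous).trans_lt
      (ENNReal.mul_lt_top (lint_ne_top ν hψ.1.continuous hψ.2).lt_top hf.2)⟩

theorem integrable_conj {f g : E → ℂ} (hf : MemLp f 2 ν) (hg : MemLp g 2 ν) :
    Integrable (fun x => f x * (starRingEnd ℂ) (g x)) ν :=
  hf.integrable_mul (p := 2) (q := 2) hg.star

theorem int_lineDeriv_zero [ν.IsAddHaarMeasure] {h h' : E → ℂ} (w : E) (hi : Integrable h ν)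
    (hi' : Integrable h' ν) (hd : ∀ x, HasLineDerivAt ℝ h (h' x) x w) : ∫ x, h' x ∂ν = 0 := by
  have := integral_bilinear_hasLineDerivAt_right_eq_neg_left_of_integrable (μ := ν)
    (f := fun _ => (1 : ℂ)) (f' := fun _ => 0) (g := h) (g' := h') (v := w)
    (B := ContinuousLinearMap.mul ℝ ℂ) (by simp) (by simpa using hi') (by simpa using hi)
    (fun x _ => by
      have := (hasFDerivAt_const (𝕜 := ℝ) (1 : ℂ) x).hasLineDerivAt w
      simpa using this) (fun x _ => hd x)
  simpa using this

theorem F_ibp [ν.IsAddHaarMeasure] {ω : E →L[ℝ] E →L[ℝ] ℝ} (hω : ∀ v w, ω v w = - ω w v) {f ψ χ : E → ℂ}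
    (hf : MemLp f 2 ν) (hψ : Sm ψ) (hχ : Sm χ) (w : E) :
    ∫ x, F ν ω f (V ω w ψ) x * (starRingEnd ℂ) (F ν ω f χ x) ∂ν =
      - ∫ x, F ν ω f ψ x * (starRingEnd ℂ) (F ν ω f (V ω w χ) x) ∂ν := by
  have hl : LocallyIntegrable f ν := hf.locallyIntegrable (by norm_num)
  have i1 := integrable_conj ν (F_memLp ν ω hf (hψ.V ω w)) (F_memLp ν ω hf hχ)
  have i2 := integrable_conj ν (F_memLp ν ω hf hψ) (F_memLp ν ω hf (hχ.V ω w))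
  have i3 := integrable_conj ν (F_memLp ν ω hf hψ) (F_memLp ν ω hf hχ)
  have := int_lineDeriv_zero ν w i3 (i1.add i2) (fun x => by
    have h1 := F_lineDeriv ν hω hl hψ x w
    have h2 := F_lineDeriv ν hω hl hχ x w
    unfold HasLineDerivAt at *
    have h3 := Complex.conjCLE.toContinuousLinearMap.hasFDerivAt.comp_hasDerivAt (0 : ℝ) h2
    refine (h1.mul h3).congr_deriv ?_
    simp
    ring)
  simp only [Pi.add_apply] at this
  rw [integral_add i1 i2] at this
  exact eq_neg_of_add_eq_zero_left this

end TW

namespace TW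
open MeasureTheory Filter Topology
open scoped ENNReal
variable {E : Type*} [NormedAddCommGroup E] [NormedSpace ℝ E]
variable [MeasurableSpace E] [BorelSpace E] [FiniteDimensional ℝ E] (ν : Measure E)
/-- `L¹`-normalized scaling -/
noncomputable def sc (ε : ℝ) (ψ : E → ℂ) (v : E) : ℂ :=
  (((ε ^ Module.finrank ℝ E)⁻¹ : ℝ) : ℂ) * ψ (ε⁻¹ • v)

theorem Sm.sc {ψ : E → ℂ} (hψ : Sm ψ) {ε : ℝ} (hε : 0 < ε) : Sm (sc ε ψ) := by
  constructor
  · exact contDiff_const.mul (hψ.1.comp (contDiff_const_smul _))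
  · exact HasCompactSupport.mul_left (hψ.2.comp_homeomorph (Homeomorph.smulOfNeZero ε⁻¹ (inv_ne_zero hε.ne')))

theorem F_sc [ν.IsAddHaarMeasure] (ω : E →L[ℝ] E →L[ℝ] ℝ) (f ψ : E → ℂ) {ε : ℝ} (hε : 0 < ε) (p : E) :
    F ν ω f (sc ε ψ) p = ∫ u, f (p - ε • u) * ψ u * Complex.exp (Complex.I * (ω p (p - ε • u) : ℂ)) ∂ν := by
  have h1 := integral_sub_left_eq_self (fun q => f q * K ω p (sc ε ψ) q) ν p
  have h2 := Measure.integral_comp_smul ν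
    (fun v => f (p - v) * ψ (ε⁻¹ • v) * Complex.exp (Complex.I * (ω p (p - v) : ℂ))) ε
  simp only [smul_smul, inv_mul_cancel₀ hε.ne', one_smul] at h2
  rw [h2, F, ← h1, ← integral_smul]
  congr 1; ext v
  have : 0 < ε ^ Module.finrank ℝ E := by positivity
  rw [abs_of_pos (by positivity), Complex.real_smul]
  simp only [K, sc, sub_sub_cancel]
  ring

theorem lint_sc [ν.IsAddHaarMeasure] {ψ : E → ℂ} (hψ : Sm ψ) {ε : ℝ} (hε : 0 < ε) :
    ∫⁻ q, ‖sc ε ψ q‖ₑ ∂ν = ∫⁻ q, ‖ψ q‖ₑ ∂ν := by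
  have hs := hψ.sc hε
  rw [← ofReal_integral_norm_eq_lintegral_enorm (hψ.1.continuous.integrable_of_hasCompactSupport hψ.2),
    ← ofReal_integral_norm_eq_lintegral_enorm (hs.1.continuous.integrable_of_hasCompactSupport hs.2)]
  congr 1
  have h2 := Measure.integral_comp_smul ν (fun v => ‖ψ (ε⁻¹ • v)‖) ε
  simp only [smul_smul, inv_mul_cancel₀ hε.ne', one_smul] at h2
  rw [h2, ← integral_smul]
  congr 1; ext v
  simp [sc]

theorem eLp_tendsto_aux [IsFiniteMeasureOnCompacts ν] {G : ℕ → E → ℂ} (hG : ∀ k, AEStronglyMeasurable (G k) ν)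
    (R C : ℝ) (h0 : ∀ k p, p ∉ Metric.closedBall (0 : E) R → G k p = 0) (hb : ∀ k p, ‖G k p‖ ≤ C)
    (ht : ∀ p, Tendsto (fun k => G k p) atTop (𝓝 0)) :
    Tendsto (fun k => eLpNorm (G k) 2 ν) atTop (𝓝 0) := by
  have h1 : Tendsto (fun k => ∫⁻ p, ‖G k p‖ₑ ^ (2 : ℝ) ∂ν) atTop (𝓝 (∫⁻ p, 0 ∂ν)) := by
    apply tendsto_lintegral_of_dominated_convergence'
      ((Metric.closedBall (0 : E) R).indicator fun _ => ENNReal.ofReal C ^ (2 : ℝ))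
    · intro k; exact (hG k).enorm.pow_const _
    · intro k
      refine Eventually.of_forall fun p => ?_
      by_cases hp : p ∈ Metric.closedBall (0 : E) R
      · rw [Set.indicator_of_mem hp]
        refine ENNReal.rpow_le_rpow ?_ zero_le_two
        rw [← ofReal_norm]; exact ENNReal.ofReal_le_ofReal (hb k p)
      · simp [h0 k p hp]
    · rw [lintegral_indicator Metric.isClosed_closedBall.measurableSet, setLIntegral_const]
      exact ENNReal.mul_ne_top (ENNReal.rpow_ne_top_of_nonneg zero_le_two ENNReal.ofReal_ne_top)
        (isCompact_closedBall 0 R).measure_lt_top.ne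
    · refine Eventually.of_forall fun p => ?_
      have := ((ht p).enorm).ennrpow_const (2 : ℝ)
      simpa using this
  have e := fun g : E → ℂ => eLpNorm_eq_lintegral_rpow_enorm_toReal (μ := ν) (f := g)
    (two_ne_zero (α := ℝ≥0∞)) ENNReal.ofNat_ne_top
  simp_rw [e]
  simp only [ENNReal.toReal_ofNat]
  have := h1.ennrpow_const (1 / 2 : ℝ)
  simpa using this

/-- The scale sequence -/
noncomputable def ep (k : ℕ) : ℝ := 1 / ((k : ℝ) + 1)
theorem ep_pos (k : ℕ) : 0 < ep k := by unfold ep; positivity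
theorem ep_le (k : ℕ) : ep k ≤ 1 := by
  unfold ep; rw [div_le_one (by positivity)]; linarith [(Nat.cast_nonneg k : (0 : ℝ) ≤ k)]
theorem ep_tend : Tendsto ep atTop (𝓝 0) := tendsto_one_div_add_atTop_nhds_zero_nat

theorem F_conv_cs [ν.IsAddHaarMeasure] {ω : E →L[ℝ] E →L[ℝ] ℝ} (hω : ∀ v w, ω v w = - ω w v) {h ψ : E → ℂ}
    (hh : Continuous h) (hc : HasCompactSupport h) (hψ : Sm ψ) :
    Tendsto (fun k => eLpNorm (fun p => F ν ω h (sc (ep k) ψ) p - (∫ u, ψ u ∂ν) * h p) 2 ν) atTop (𝓝 0) := by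
  have hψi : Integrable ψ ν := hψ.1.continuous.integrable_of_hasCompactSupport hψ.2
  obtain ⟨C, hC⟩ := hc.exists_bound_of_continuous hh
  obtain ⟨R1, hR1⟩ := hc.isCompact.isBounded.subset_closedBall (0 : E)
  obtain ⟨R2, hR2⟩ := hψ.2.isCompact.isBounded.subset_closedBall (0 : E)
  have hC0 : 0 ≤ C := (norm_nonneg _).trans (hC 0)
  have hωs : ∀ v, ω v v = 0 := fun v => by linarith [hω v v]
  have hbF : ∀ k p, ‖F ν ω h (sc (ep k) ψ) p‖ ≤ C * ∫ u, ‖ψ u‖ ∂ν := by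
    intro k p
    rw [F_sc ν ω h ψ (ep_pos k), ← integral_const_mul]
    refine norm_integral_le_of_norm_le (hψi.norm.const_mul C) (Eventually.of_forall fun u => ?_)
    rw [norm_mul, norm_mul, norm_expI, mul_one]
    exact mul_le_mul_of_nonneg_right (hC _) (norm_nonneg _)
  refine eLp_tendsto_aux ν (fun k => ?_) (max R1 0 + max R2 0) (C * ∫ u, ‖ψ u‖ ∂ν + ‖∫ u, ψ u ∂ν‖ * C) ?_ ?_ ?_
  · exact (F_meas ν ω hh.aestronglyMeasurable (hψ.sc (ep_pos k)).1.continuous).aestronglyMeasurable.sub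
      (hh.aestronglyMeasurable.const_mul _)
  · intro k p hp
    rw [mem_closedBall_zero_iff, not_le] at hp
    have h1 : h p = 0 := by
      by_contra hne
      have := hR1 (subset_tsupport h hne)
      rw [mem_closedBall_zero_iff] at this
      linarith [le_max_left R1 0, le_max_right R2 0]
    have h2 : F ν ω h (sc (ep k) ψ) p = 0 := by
      rw [F_sc ν ω h ψ (ep_pos k)]
      refine integral_eq_zero_of_ae (Eventually.of_forall fun u => ?_)
      by_cases hu : ψ u = 0
      · simp [hu]
      have h3 := hR2 (subset_tsupport ψ hu)
      rw [mem_closedBall_zero_iff] at h3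
      have : h (p - ep k • u) = 0 := by
        by_contra hne
        have h4 := hR1 (subset_tsupport h hne)
        rw [mem_closedBall_zero_iff] at h4
        have h5 : ‖p‖ ≤ ‖p - ep k • u‖ + ‖ep k • u‖ := by
          have := norm_add_le (p - ep k • u) (ep k • u)
          simpa using this
        have h6 : ‖ep k • u‖ ≤ ‖u‖ := by
          rw [norm_smul, Real.norm_of_nonneg (ep_pos k).le]
          exact mul_le_of_le_one_left (norm_nonneg _) (ep_le k)
        linarith [le_max_left R1 0, le_max_left R2 0]
      simp [this]
    simp [h1, h2]
  · intro k p
    refine (norm_sub_le _ _).trans (add_le_add (hbF k p) ?_)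
    rw [norm_mul]
    exact mul_le_mul_of_nonneg_left (hC p) (norm_nonneg _)
  · intro p
    rw [tendsto_sub_nhds_zero_iff]
    have e : ∀ k, F ν ω h (sc (ep k) ψ) p =
      ∫ u, h (p - ep k • u) * ψ u * Complex.exp (Complex.I * (ω p (p - ep k • u) : ℂ)) ∂ν :=
      fun k => F_sc ν ω h ψ (ep_pos k) p
    simp_rw [e]
    rw [mul_comm, ← integral_const_mul]
    refine tendsto_integral_of_dominated_convergence (fun u => C * ‖ψ u‖) (fun k => ?_)
      (hψi.norm.const_mul C) (fun k => Eventually.of_forall fun u => ?_) (Eventually.of_forall fun u => ?_)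
    · have h1 : Continuous (fun u => p - ep k • u) := by fun_prop
      have h2 : Continuous (fun u => ω p (p - ep k • u)) := by fun_prop
      exact (((hh.comp h1).mul hψ.1.continuous).mul (Complex.continuous_exp.comp
        (continuous_const.mul (Complex.continuous_ofReal.comp h2)))).aestronglyMeasurable
    · rw [norm_mul, norm_mul, norm_expI, mul_one]
      exact mul_le_mul_of_nonneg_right (hC _) (norm_nonneg _)
    · have hc : Continuous (fun s : ℝ => h (p - s • u) * ψ u * Complex.exp (Complex.I * (ω p (p - s • u) : ℂ))) := by
        have h1 : Continuous (fun s : ℝ => p - s • u) := by fun_prop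
        have h2 : Continuous (fun s : ℝ => ω p (p - s • u)) := by fun_prop
        exact (((hh.comp h1).mul continuous_const).mul (Complex.continuous_exp.comp
          (continuous_const.mul (Complex.continuous_ofReal.comp h2))))
      have := (hc.tendsto 0).comp ep_tend
      simpa [hωs, Function.comp_def] using this

theorem F_conv [ν.IsAddHaarMeasure] {ω : E →L[ℝ] E →L[ℝ] ℝ} (hω : ∀ v w, ω v w = - ω w v) {f ψ : E → ℂ}
    (hf : MemLp f 2 ν) (hψ : Sm ψ) :
    Tendsto (fun k => eLpNorm (fun p => F ν ω f (sc (ep k) ψ) p - (∫ u, ψ u ∂ν) * f p) 2 ν) atTop (𝓝 0) := by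
  have hMt := lint_ne_top ν hψ.1.continuous hψ.2
  set M := ∫⁻ q, ‖ψ q‖ₑ ∂ν with hM
  set c := ∫ u, ψ u ∂ν with hcdef
  have hct : ‖c‖ₑ ≠ ⊤ := enorm_ne_top
  rw [ENNReal.tendsto_nhds_zero]
  intro δ hδ
  rcases eq_or_ne δ ⊤ with rfl | hδt
  · simp
  obtain ⟨η, hη0, hη⟩ : ∃ η : ℝ≥0∞, η ≠ 0 ∧ (M + ‖c‖ₑ) * η ≤ δ / 2 := by
    refine ⟨δ / 2 / (M + ‖c‖ₑ), ?_, ENNReal.mul_div_le⟩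
    exact (ENNReal.div_pos (ENNReal.half_pos hδ.ne').ne' (ENNReal.add_ne_top.2 ⟨hMt, hct⟩)).ne'
  obtain ⟨h, hhc, hfh, hh, hhL⟩ := hf.exists_hasCompactSupport_eLpNorm_sub_le ENNReal.ofNat_ne_top hη0
  have hconv := ENNReal.tendsto_nhds_zero.1 (F_conv_cs ν hω hh hhc hψ) (δ / 2) (ENNReal.half_pos hδ.ne')
  filter_upwards [hconv] with k hk
  have hsc := hψ.sc (ep_pos k)
  have hl : LocallyIntegrable f ν := hf.locallyIntegrable (by norm_num)
  have hlh : LocallyIntegrable h ν := hhL.locallyIntegrable (by norm_num)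
  have hsub : MemLp (f - h) 2 ν := hf.sub hhL
  have e : (fun p => F ν ω f (sc (ep k) ψ) p - c * f p) =
      (fun p => F ν ω (f - h) (sc (ep k) ψ) p) + (fun p => F ν ω h (sc (ep k) ψ) p - c * h p)
        - c • (f - h) := by
    ext p
    have : F ν ω (f - h) (sc (ep k) ψ) p = F ν ω f (sc (ep k) ψ) p - F ν ω h (sc (ep k) ψ) p := by
      unfold F
      rw [← integral_sub (integrable_mul_cs ν hl (hsc.K ω p).1.continuous (hsc.K ω p).2)
        (integrable_mul_cs ν hlh (hsc.K ω p).1.continuous (hsc.K ω p).2)]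
      congr 1; ext q; simp [sub_mul]
    simp only [Pi.add_apply, Pi.sub_apply, Pi.smul_apply, smul_eq_mul, this]
    ring
  have m1 := F_memLp ν ω hsub hsc
  have m2 := F_memLp ν ω hhL hsc
  have m3 : MemLp (fun p => F ν ω h (sc (ep k) ψ) p - c * h p) 2 ν := m2.sub (hhL.const_mul c)
  rw [e]
  calc _ ≤ eLpNorm ((fun p => F ν ω (f - h) (sc (ep k) ψ) p) + (fun p => F ν ω h (sc (ep k) ψ) p - c * h p)) 2 ν
        + eLpNorm (c • (f - h)) 2 ν :=
        eLpNorm_sub_le (m1.1.add m3.1) (hsub.1.const_smul c) (by norm_num)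
    _ ≤ (eLpNorm (fun p => F ν ω (f - h) (sc (ep k) ψ) p) 2 ν + eLpNorm (fun p => F ν ω h (sc (ep k) ψ) p - c * h p) 2 ν)
        + ‖c‖ₑ * eLpNorm (f - h) 2 ν := by
        gcongr
        · exact eLpNorm_add_le m1.1 m3.1 (by norm_num)
        · exact (eLpNorm_const_smul _ _ _ _).le
    _ ≤ (M * η + δ / 2) + ‖c‖ₑ * η := by
        gcongr
        refine (F_L2 ν ω hsub.1 hsc.1.continuous).trans ?_
        rw [lint_sc ν hψ (ep_pos k)]
        gcongr
    _ = (M + ‖c‖ₑ) * η + δ / 2 := by ring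
    _ ≤ δ / 2 + δ / 2 := by gcongr
    _ = δ := ENNReal.add_halves δ

end TW

namespace TW
open MeasureTheory Filter Topology
open scoped ENNReal

variable {E : Type*} [NormedAddCommGroup E] [NormedSpace ℝ E]

theorem fderiv_V {f : E → ℂ} (hf : Sm f) (ω : E →L[ℝ] E →L[ℝ] ℝ) (u w p : E) :
    fderiv ℝ (V ω u f) p w = fderiv ℝ (fun q => fderiv ℝ f q u) p w
      + Complex.I * ((ω w u : ℂ) * f p + (ω p u : ℂ) * fderiv ℝ f p w) := by
  have h1 : Differentiable ℝ (fun p => fderiv ℝ f p u) :=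
    ((hf.1.fderiv_right (m := (⊤ : ℕ∞)) (by simp)).clm_apply contDiff_const).differentiable (by simp)
  have h2 : HasFDerivAt (fun p => (ω p u : ℂ)) (Complex.ofRealCLM.comp (ω.flip u)) p :=
    Complex.ofRealCLM.hasFDerivAt.comp p (ω.flip u).hasFDerivAt
  have h3 := (h1 p).hasFDerivAt.add ((h2.const_mul Complex.I).mul (hf.diff p).hasFDerivAt)
  have h4 : V ω u f = (fun p => fderiv ℝ f p u) + (fun p => Complex.I * (ω p u : ℂ)) * f := by
    ext p; simp [V]
  rw [h4, h3.fderiv]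
  simp
  ring

/-- the degree zero part -/
noncomputable def D (ω : E →L[ℝ] E →L[ℝ] ℝ) (w u : E) (f : E → ℂ) (p : E) : ℂ :=
  2 * Complex.I * ((ω w u : ℂ) * f p + (ω p u : ℂ) * fderiv ℝ f p w + (ω p w : ℂ) * fderiv ℝ f p u)

theorem V_V {f : E → ℂ} (hf : Sm f) (ω : E →L[ℝ] E →L[ℝ] ℝ) (w u p : E) :
    V ω w (V ω u f) p - V (-ω) w (V (-ω) u f) p = D ω w u f p := by
  have h : ∀ ω : E →L[ℝ] E →L[ℝ] ℝ, V ω w (V ω u f) p = fderiv ℝ (V ω u f) p w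
      + Complex.I * (ω p w : ℂ) * (fderiv ℝ f p u + Complex.I * (ω p u : ℂ) * f p) := fun _ => rfl
  rw [h, h, fderiv_V hf, fderiv_V hf, D]
  simp
  ring

variable [MeasurableSpace E] [BorelSpace E] [FiniteDimensional ℝ E] (ν : Measure E)

theorem fderiv_sc {f : E → ℂ} (hf : Sm f) (ε : ℝ) (p w : E) : 
    fderiv ℝ (sc ε f) p w = (((ε ^ Module.finrank ℝ E)⁻¹ : ℝ) : ℂ) * ((ε⁻¹ : ℝ) * fderiv ℝ f (ε⁻¹ • p) w) := by
  have h1 : HasFDerivAt (fun p : E => ε⁻¹ • p) (ε⁻¹ • ContinuousLinearMap.id ℝ E) p :=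
    (hasFDerivAt_id p).const_smul _
  have h2 := ((hf.diff (ε⁻¹ • p)).hasFDerivAt.comp p h1).const_mul (((ε ^ Module.finrank ℝ E)⁻¹ : ℝ) : ℂ)
  have h3 : sc ε f = fun p => (((ε ^ Module.finrank ℝ E)⁻¹ : ℝ) : ℂ) * (f ∘ fun p : E => ε⁻¹ • p) p := by
    ext p; simp [sc]
  rw [h3, h2.fderiv]
  simp

theorem D_sc {f : E → ℂ} (hf : Sm f) (ω : E →L[ℝ] E →L[ℝ] ℝ) (w u : E) (ε : ℝ) :
    D ω w u (sc ε f) = sc ε (D ω w u f) := by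
  ext p
  simp only [D, fderiv_sc hf, sc]
  simp
  ring

theorem int_D [ν.IsAddHaarMeasure] {f : E → ℂ} (hf : Sm f) {ω : E →L[ℝ] E →L[ℝ] ℝ} (hω : ∀ v w, ω v w = - ω w v) (w u : E) :
    ∫ x, D ω w u f x ∂ν = 2 * Complex.I * (ω w u : ℂ) * ∫ x, f x ∂ν := by
  have hsm : ∀ u, Sm (fun p => (ω p u : ℂ) * f p) := fun u => by
    have h2 : ContDiff ℝ (⊤ : ℕ∞) (fun p => (ω p u : ℂ)) :=
      Complex.ofRealCLM.contDiff.comp (ω.contDiff.clm_apply contDiff_const)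
    exact ⟨h2.mul hf.1, hf.2.mul_left⟩
  have hfd : ∀ u w p, fderiv ℝ (fun p => (ω p u : ℂ) * f p) p w = (ω w u : ℂ) * f p + (ω p u : ℂ) * fderiv ℝ f p w := by
    intro u w p
    have h2 : HasFDerivAt (fun p => (ω p u : ℂ)) (Complex.ofRealCLM.comp (ω.flip u)) p :=
      Complex.ofRealCLM.hasFDerivAt.comp p (ω.flip u).hasFDerivAt
    have := (h2.mul (hf.diff p).hasFDerivAt).fderiv
    rw [show (fun p => (ω p u : ℂ) * f p) = (fun p => (ω p u : ℂ)) * f from rfl, this]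
    simp; ring
  have hsint : ∀ {g : E → ℂ}, Sm g → Integrable g ν := fun hg => hg.1.continuous.integrable_of_hasCompactSupport hg.2
  have hfi : ∀ {g : E → ℂ}, Sm g → ∀ w, Integrable (fun p => fderiv ℝ g p w) ν := fun {g} hg w => by
    have := hg.V 0 w
    have e : V 0 w g = fun p => fderiv ℝ g p w := by ext p; simp [V]
    rw [e] at this
    exact hsint this
  have hz : ∀ {g : E → ℂ}, Sm g → ∀ w, ∫ p, fderiv ℝ g p w ∂ν = 0 := fun {g} hg w =>
    int_lineDeriv_zero ν w (hsint hg) (hfi hg w) fun x => (hg.diff x).hasFDerivAt.hasLineDerivAt w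
  have e : D ω w u f = fun p => 2 * Complex.I * (fderiv ℝ (fun p => (ω p u : ℂ) * f p) p w
      + fderiv ℝ (fun p => (ω p w : ℂ) * f p) p u + (ω w u : ℂ) * f p) := by
    ext p
    rw [hfd, hfd, D, hω u w]
    push_cast; ring
  have hadd : Integrable (fun p => fderiv ℝ (fun p => (ω p u : ℂ) * f p) p w
      + fderiv ℝ (fun p => (ω p w : ℂ) * f p) p u) ν := (hfi (hsm u) w).add (hfi (hsm w) u)
  rw [e, integral_const_mul, integral_add hadd ((hsint hf).const_mul _),
    integral_add (hfi (hsm u) w) (hfi (hsm w) u), hz (hsm u), hz (hsm w), integral_const_mul]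
  ring

end TW

namespace TW
open MeasureTheory Filter Topology
open scoped ENNReal

variable {E : Type*} [NormedAddCommGroup E] [NormedSpace ℝ E]

variable {ι : Type*} [Fintype ι]

/-- twisted second order operator -/
noncomputable def Lop (A : ι → ι → ℂ) (e : ι → E) (ω : E →L[ℝ] E →L[ℝ] ℝ) (f : E → ℂ) (p : E) : ℂ :=
  ∑ j, ∑ k, A j k * V ω (e j) (V ω (e k) f) p

theorem Sm.Lop {f : E → ℂ} (hf : Sm f) (A : ι → ι → ℂ) (e : ι → E) (ω : E →L[ℝ] E →L[ℝ] ℝ) :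
    Sm (Lop A e ω f) :=
  Sm.sum _ fun _ => Sm.sum _ fun _ => ((hf.V _ _).V _ _).cmul _

theorem V_neg {f : E → ℂ} (ω : E →L[ℝ] E →L[ℝ] ℝ) (w : E) :
    V ω w (fun q => - f q) = fun q => - V ω w f q := by
  ext q
  have : fderiv ℝ (fun q => - f q) q = - fderiv ℝ f q := fderiv_fun_neg
  simp [V, this]
  ring

theorem Lop_K {f : E → ℂ} (hf : Sm f) (A : ι → ι → ℂ) (e : ι → E) (ω : E →L[ℝ] E →L[ℝ] ℝ) (p : E) :
    Lop A e (-ω) (K ω p f) = K ω p (Lop A e (-ω) f) := by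
  ext q
  have h : ∀ j k, V (-ω) (e j) (V (-ω) (e k) (K ω p f)) = K ω p (V (-ω) (e j) (V (-ω) (e k) f)) := by
    intro j k
    rw [V_K hf, V_neg, V_K (hf.V _ _)]
    ext; simp
  simp only [Lop, h]
  simp only [K, Lop, Finset.sum_mul, mul_assoc]

variable [MeasurableSpace E] [BorelSpace E] [FiniteDimensional ℝ E] (ν : Measure E)

section lin
variable [IsLocallyFiniteMeasure ν]

theorem F_int (ω : E →L[ℝ] E →L[ℝ] ℝ) {f ψ : E → ℂ} (hf : LocallyIntegrable f ν) (hψ : Sm ψ) (p : E) :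
    Integrable (fun q => f q * K ω p ψ q) ν :=
  integrable_mul_cs ν hf (hψ.K ω p).1.continuous (hψ.K ω p).2

theorem F_add (ω : E →L[ℝ] E →L[ℝ] ℝ) {f ψ χ : E → ℂ} (hf : LocallyIntegrable f ν) (hψ : Sm ψ) (hχ : Sm χ) (p : E) :
    F ν ω f (fun q => ψ q + χ q) p = F ν ω f ψ p + F ν ω f χ p := by
  rw [F, F, F, ← integral_add (F_int ν ω hf hψ p) (F_int ν ω hf hχ p)]
  congr 1; ext q; simp only [K]; ring

theorem F_sum2 (ω : E →L[ℝ] E →L[ℝ] ℝ) {f : E → ℂ} {ψ : ι → ι → E → ℂ} (A : ι → ι → ℂ)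
    (hf : LocallyIntegrable f ν) (hψ : ∀ j k, Sm (ψ j k)) (p : E) :
    F ν ω f (fun q => ∑ j, ∑ k, A j k * ψ j k q) p = ∑ j, ∑ k, A j k * F ν ω f (ψ j k) p := by
  simp only [F]
  simp_rw [← integral_const_mul]
  have hi : ∀ j k, Integrable (fun q => A j k * (f q * K ω p (ψ j k) q)) ν :=
    fun j k => (F_int ν ω hf (hψ j k) p).const_mul _
  rw [show (∑ j, ∑ k, ∫ q, A j k * (f q * K ω p (ψ j k) q) ∂ν)
    = ∫ q, ∑ j, ∑ k, A j k * (f q * K ω p (ψ j k) q) ∂ν by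
      rw [integral_finsetSum _ fun j _ => integrable_finsetSum _ fun k _ => hi j k]
      refine Finset.sum_congr rfl fun j _ => ?_
      rw [integral_finsetSum _ fun k _ => hi j k]]
  congr 1; ext q
  simp only [K, Finset.sum_mul, Finset.mul_sum]
  refine Finset.sum_congr rfl fun j _ => Finset.sum_congr rfl fun k _ => ?_
  ring

end lin

theorem re_form_nonneg {A : ι → ι → ℂ} (hA : ∀ j k, A j k = A k j)
    (hpos : ∀ u : ι → ℝ, 0 ≤ ∑ j, ∑ k, (A j k).re * u j * u k) (z : ι → ℂ) :
    0 ≤ (∑ j, ∑ k, A j k * (z k * (starRingEnd ℂ) (z j))).re := by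
  have h1 := hpos fun j => (z j).re
  have h2 := hpos fun j => (z j).im
  have h3 : ∑ j, ∑ k, (A j k).im * ((z k).im * (z j).re) = ∑ j, ∑ k, (A j k).im * ((z k).re * (z j).im) := by
    rw [Finset.sum_comm]
    refine Finset.sum_congr rfl fun j _ => Finset.sum_congr rfl fun k _ => ?_
    rw [hA]; ring
  have h4 : (∑ j, ∑ k, A j k * (z k * (starRingEnd ℂ) (z j))).re =
      (∑ j, ∑ k, (A j k).re * (z j).re * (z k).re) + (∑ j, ∑ k, (A j k).re * (z j).im * (z k).im)
      - (∑ j, ∑ k, (A j k).im * ((z k).im * (z j).re)) + ∑ j, ∑ k, (A j k).im * ((z k).re * (z j).im) := by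
    rw [Complex.re_sum]
    simp_rw [Complex.re_sum]
    simp_rw [← Finset.sum_add_distrib, ← Finset.sum_sub_distrib, ← Finset.sum_add_distrib]
    refine Finset.sum_congr rfl fun j _ => Finset.sum_congr rfl fun k _ => ?_
    simp
    ring
  rw [h4, h3]; linarith

theorem F_diss [ν.IsAddHaarMeasure] {ω : E →L[ℝ] E →L[ℝ] ℝ} (hω : ∀ v w, ω v w = - ω w v)
    {A : ι → ι → ℂ} (hA : ∀ j k, A j k = A k j)
    (hpos : ∀ u : ι → ℝ, 0 ≤ ∑ j, ∑ k, (A j k).re * u j * u k) (e : ι → E)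
    {f ψ : E → ℂ} (hf : MemLp f 2 ν) (hψ : Sm ψ) :
    (∫ x, F ν ω f (Lop A e ω ψ) x * (starRingEnd ℂ) (F ν ω f ψ x) ∂ν).re ≤ 0 := by
  have hl : LocallyIntegrable f ν := hf.locallyIntegrable (by norm_num)
  have h0 : ∀ x, F ν ω f (Lop A e ω ψ) x * (starRingEnd ℂ) (F ν ω f ψ x) =
      ∑ j, ∑ k, A j k * (F ν ω f (V ω (e j) (V ω (e k) ψ)) x * (starRingEnd ℂ) (F ν ω f ψ x)) := by
    intro x
    have := F_sum2 ν ω A hl (ψ := fun j k => V ω (e j) (V ω (e k) ψ)) (fun j k => (hψ.V _ _).V _ _) x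
    rw [show Lop A e ω ψ = (fun q => ∑ j, ∑ k, A j k * V ω (e j) (V ω (e k) ψ) q) from rfl, this]
    simp only [Finset.sum_mul, mul_assoc]
  have i1 : ∀ j k, Integrable (fun x => A j k * (F ν ω f (V ω (e j) (V ω (e k) ψ)) x * (starRingEnd ℂ) (F ν ω f ψ x))) ν :=
    fun j k => (integrable_conj ν (F_memLp ν ω hf ((hψ.V _ _).V _ _)) (F_memLp ν ω hf hψ)).const_mul _
  have i2 : ∀ j k, Integrable (fun x => A j k * (F ν ω f (V ω (e k) ψ) x * (starRingEnd ℂ) (F ν ω f (V ω (e j) ψ) x))) ν :=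
    fun j k => (integrable_conj ν (F_memLp ν ω hf (hψ.V _ _)) (F_memLp ν ω hf (hψ.V _ _))).const_mul _
  have key : ∫ x, F ν ω f (Lop A e ω ψ) x * (starRingEnd ℂ) (F ν ω f ψ x) ∂ν =
      - ∫ x, ∑ j, ∑ k, A j k * (F ν ω f (V ω (e k) ψ) x * (starRingEnd ℂ) (F ν ω f (V ω (e j) ψ) x)) ∂ν := by
    simp_rw [h0]
    rw [integral_finsetSum _ fun j _ => integrable_finsetSum _ fun k _ => i1 j k,
      integral_finsetSum _ fun j _ => integrable_finsetSum _ fun k _ => i2 j k, ← Finset.sum_neg_distrib]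
    refine Finset.sum_congr rfl fun j _ => ?_
    rw [integral_finsetSum _ fun k _ => i1 j k, integral_finsetSum _ fun k _ => i2 j k, ← Finset.sum_neg_distrib]
    refine Finset.sum_congr rfl fun k _ => ?_
    rw [integral_const_mul, integral_const_mul, F_ibp ν hω hf (hψ.V ω (e k)) hψ (e j)]
    ring
  rw [key, Complex.neg_re, neg_nonpos]
  have := integral_re (𝕜 := ℂ) (μ := ν) (f := fun x => ∑ j, ∑ k, A j k * (F ν ω f (V ω (e k) ψ) x * (starRingEnd ℂ) (F ν ω f (V ω (e j) ψ) x)))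
    (integrable_finsetSum _ fun j _ => integrable_finsetSum _ fun k _ => i2 j k)
  simp only [RCLike.re_to_complex] at this
  rw [← this]
  exact integral_nonneg fun x => re_form_nonneg hA hpos fun j => F ν ω f (V ω (e j) ψ) x

theorem exists_bump [ν.IsAddHaarMeasure] : ∃ φ : E → ℂ, Sm φ ∧ ∫ x, φ x ∂ν = 1 := by
  let b : ContDiffBump (0 : E) := ⟨1, 2, by norm_num, by norm_num⟩
  refine ⟨fun x => (b.normed ν x : ℂ), ⟨Complex.ofRealCLM.contDiff.comp b.contDiff_normed, ?_⟩, ?_⟩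
  · exact b.hasCompactSupport_normed.comp_left (g := Complex.ofReal) Complex.ofReal_zero
  · rw [integral_complex_ofReal, b.integral_normed]; simp

/-- convergence of the pairing in `L²` -/
theorem tendsto_pair {a b : ℕ → E → ℂ} {a' b' : E → ℂ} (ha : ∀ k, MemLp (a k) 2 ν) (hb : ∀ k, MemLp (b k) 2 ν)
    (ha' : MemLp a' 2 ν) (hb' : MemLp b' 2 ν)
    (h1 : Tendsto (fun k => eLpNorm (fun p => a k p - a' p) 2 ν) atTop (𝓝 0))
    (h2 : Tendsto (fun k => eLpNorm (fun p => b k p - b' p) 2 ν) atTop (𝓝 0)) :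
    Tendsto (fun k => ∫ x, a k x * (starRingEnd ℂ) (b k x) ∂ν) atTop (𝓝 (∫ x, a' x * (starRingEnd ℂ) (b' x) ∂ν)) := by
  have hin : ∀ {f g : E → ℂ} (hf : MemLp f 2 ν) (hg : MemLp g 2 ν),
      inner ℂ (hg.toLp g) (hf.toLp f) = ∫ x, f x * (starRingEnd ℂ) (g x) ∂ν := by
    intro f g hf hg
    rw [L2.inner_def]
    refine integral_congr_ae ?_
    filter_upwards [hf.coeFn_toLp, hg.coeFn_toLp] with x h1 h2
    rw [h1, h2]; simp [mul_comm]
  have t1 : Tendsto (fun k => (ha k).toLp (a k)) atTop (𝓝 (ha'.toLp a')) :=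
    (Lp.tendsto_Lp_iff_tendsto_eLpNorm'' a ha a' ha').2 h1
  have t2 : Tendsto (fun k => (hb k).toLp (b k)) atTop (𝓝 (hb'.toLp b')) :=
    (Lp.tendsto_Lp_iff_tendsto_eLpNorm'' b hb b' hb').2 h2
  have := t2.inner (𝕜 := ℂ) t1
  simpa only [hin] using this

theorem max_diss [ν.IsAddHaarMeasure] {ω : E →L[ℝ] E →L[ℝ] ℝ} (hω : ∀ v w, ω v w = - ω w v)
    {A : ι → ι → ℂ} (hA : ∀ j k, A j k = A k j)
    (hpos : ∀ u : ι → ℝ, 0 ≤ ∑ j, ∑ k, (A j k).re * u j * u k) (e : ι → E)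
    {f g : E → ℂ} (hf : MemLp f 2 ν) (hg : MemLp g 2 ν)
    (hfg : ∀ χ, Sm χ → ∫ x, f x * Lop A e (-ω) χ x ∂ν = ∫ x, g x * χ x ∂ν) :
    (∫ x, g x * (starRingEnd ℂ) (f x) ∂ν).re ≤ 0 := by
  have hl : LocallyIntegrable f ν := hf.locallyIntegrable (by norm_num)
  obtain ⟨φ, hφ, hφ1⟩ := exists_bump (E := E) ν
  let C : E → ℂ := fun p => ∑ j, ∑ k, A j k * D ω (e j) (e k) φ p
  have hsub : ∀ {ψ : E → ℂ}, Sm ψ → ∀ p, Lop A e ω ψ p = Lop A e (-ω) ψ p + ∑ j, ∑ k, A j k * D ω (e j) (e k) ψ p := by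
    intro ψ hψ p
    simp only [Lop, ← V_V hψ, ← Finset.sum_add_distrib]
    refine Finset.sum_congr rfl fun j _ => Finset.sum_congr rfl fun k _ => ?_
    ring
  have hDs : ∀ {ψ : E → ℂ}, Sm ψ → ∀ j k, Sm (D ω (e j) (e k) ψ) := by
    intro ψ hψ j k
    rw [show D ω (e j) (e k) ψ = fun p => V ω (e j) (V ω (e k) ψ) p - V (-ω) (e j) (V (-ω) (e k) ψ) p from
      funext fun p => (V_V hψ ω _ _ p).symm]
    exact ((hψ.V _ _).V _ _).sub ((hψ.V _ _).V _ _)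
  have hC : Sm C := Sm.sum _ fun j => Sm.sum _ fun k => (hDs hφ j k).cmul _
  have hC0 : ∫ x, C x ∂ν = 0 := by
    have i1 : ∀ j k, Integrable (fun x => A j k * D ω (e j) (e k) φ x) ν := fun j k =>
      ((hDs hφ j k).1.continuous.integrable_of_hasCompactSupport (hDs hφ j k).2).const_mul _
    have e1 : ∫ x, C x ∂ν = ∑ j, ∑ k, A j k * (2 * Complex.I * (ω (e j) (e k) : ℂ)) := by
      simp only [C]
      rw [integral_finsetSum _ fun j _ => integrable_finsetSum _ fun k _ => i1 j k]
      refine Finset.sum_congr rfl fun j _ => ?_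
      rw [integral_finsetSum _ fun k _ => i1 j k]
      refine Finset.sum_congr rfl fun k _ => ?_
      rw [integral_const_mul, int_D ν hφ hω, hφ1, mul_one]
    have e2 : ∑ j, ∑ k, A j k * (2 * Complex.I * (ω (e j) (e k) : ℂ)) =
        - ∑ j, ∑ k, A j k * (2 * Complex.I * (ω (e j) (e k) : ℂ)) := by
      conv_lhs => rw [Finset.sum_comm]
      simp_rw [← Finset.sum_neg_distrib]
      refine Finset.sum_congr rfl fun j _ => Finset.sum_congr rfl fun k _ => ?_
      rw [hA k j, hω (e k) (e j)]; push_cast; ring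
    rw [e1]
    exact self_eq_neg.1 e2
  have hFg : ∀ {ψ : E → ℂ}, Sm ψ → F ν ω f (Lop A e (-ω) ψ) = F ν ω g ψ := by
    intro ψ hψ
    ext p
    rw [F, F, ← hfg _ (hψ.K ω p), Lop_K hψ]
  have hCk : ∀ k, (fun p => ∑ i, ∑ j, A i j * D ω (e i) (e j) (sc (ep k) φ) p) = sc (ep k) C := by
    intro k
    ext p
    simp only [D_sc hφ, sc, C, Finset.mul_sum]
    refine Finset.sum_congr rfl fun j _ => Finset.sum_congr rfl fun k _ => ?_
    ring
  have hsplit : ∀ k x, F ν ω f (Lop A e ω (sc (ep k) φ)) x = F ν ω g (sc (ep k) φ) x + F ν ω f (sc (ep k) C) x := by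
    intro k x
    have hs := hφ.sc (ep_pos k)
    rw [show Lop A e ω (sc (ep k) φ) = fun p => Lop A e (-ω) (sc (ep k) φ) p + sc (ep k) C p from
      funext fun p => by rw [hsub hs, ← hCk], F_add ν ω hl (hs.Lop _ _ _) (hC.sc (ep_pos k)), hFg hs]
  have c1 := F_conv ν hω hf hφ
  have c2 := F_conv ν hω hg hφ
  have c3 := F_conv ν hω hf hC
  simp only [hφ1, one_mul, hC0, zero_mul, sub_zero] at c1 c2 c3
  have m1 : ∀ k, MemLp (F ν ω f (sc (ep k) φ)) 2 ν := fun k => F_memLp ν ω hf (hφ.sc (ep_pos k))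
  have m2 : ∀ k, MemLp (F ν ω g (sc (ep k) φ)) 2 ν := fun k => F_memLp ν ω hg (hφ.sc (ep_pos k))
  have m3 : ∀ k, MemLp (F ν ω f (sc (ep k) C)) 2 ν := fun k => F_memLp ν ω hf (hC.sc (ep_pos k))
  have p1 := tendsto_pair ν m2 m1 hg hf c2 c1
  have p2 := tendsto_pair ν m3 m1 (a' := fun _ => 0) MemLp.zero hf (by simpa using c3) c1
  have p3 := p1.add p2
  simp only [zero_mul, integral_zero, add_zero] at p3
  have p4 := (Complex.continuous_re.tendsto _).comp p3
  refine le_of_tendsto p4 (Eventually.of_forall fun k => ?_)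
  have hd := F_diss ν hω hA hpos e hf (hφ.sc (ep_pos k))
  simp only [hsplit, add_mul] at hd
  rw [integral_add (integrable_conj ν (m2 k) (m1 k)) (integrable_conj ν (m3 k) (m1 k))] at hd
  exact hd

end TW

namespace TW
open MeasureTheory Filter Topology
open scoped ENNReal

variable {E : Type*} [NormedAddCommGroup E] [NormedSpace ℝ E]
variable {ι : Type*} [Fintype ι]

theorem V_conj {f : E → ℂ} (hf : Sm f) (ω : E →L[ℝ] E →L[ℝ] ℝ) (w : E) :
    V (-ω) w (fun p => (starRingEnd ℂ) (f p)) = fun p => (starRingEnd ℂ) (V ω w f p) := by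
  ext p
  have h : HasFDerivAt (fun p => (starRingEnd ℂ) (f p))
      ((Complex.conjCLE : ℂ →L[ℝ] ℂ).comp (fderiv ℝ f p)) p :=
    (Complex.conjCLE : ℂ →L[ℝ] ℂ).hasFDerivAt.comp p (hf.diff p).hasFDerivAt
  rw [V, h.fderiv, V]
  simp

theorem Lop_conj {f : E → ℂ} (hf : Sm f) (A : ι → ι → ℂ) (e : ι → E) (ω : E →L[ℝ] E →L[ℝ] ℝ) (p : E) :
    Lop (fun j k => (starRingEnd ℂ) (A j k)) e (-ω) (fun p => (starRingEnd ℂ) (f p)) p =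
      (starRingEnd ℂ) (Lop A e ω f p) := by
  simp only [Lop, map_sum, map_mul]
  refine Finset.sum_congr rfl fun j _ => Finset.sum_congr rfl fun k _ => ?_
  rw [V_conj hf, V_conj (hf.V _ _)]

variable [MeasurableSpace E] [BorelSpace E] [FiniteDimensional ℝ E] (ν : Measure E)

theorem Sm.int [IsFiniteMeasureOnCompacts ν] {f : E → ℂ} (hf : Sm f) : Integrable f ν :=
  hf.1.continuous.integrable_of_hasCompactSupport hf.2

theorem Sm.mul {f g : E → ℂ} (hf : Sm f) (hg : Sm g) : Sm (fun p => f p * g p) :=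
  ⟨hf.1.mul hg.1, hf.2.mul_right⟩

theorem Sm.memLp [IsFiniteMeasureOnCompacts ν] {f : E → ℂ} (hf : Sm f) : MemLp f 2 ν :=
  hf.1.continuous.memLp_of_hasCompactSupport hf.2

theorem V_ibp [ν.IsAddHaarMeasure] {f g : E → ℂ} (hf : Sm f) (hg : Sm g) (ω : E →L[ℝ] E →L[ℝ] ℝ) (w : E) :
    ∫ x, V ω w f x * g x ∂ν = - ∫ x, f x * V (-ω) w g x ∂ν := by
  have i1 := ((hf.V ω w).mul hg).int ν
  have i2 := (hf.mul (hg.V (-ω) w)).int ν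
  rw [eq_neg_iff_add_eq_zero, ← integral_add i1 i2]
  refine int_lineDeriv_zero ν w ((hf.mul hg).int ν) (i1.add i2) fun x => ?_
  have := ((hf.diff x).hasFDerivAt.mul (hg.diff x).hasFDerivAt).hasLineDerivAt w
  refine (this.congr_deriv ?_ : HasLineDerivAt ℝ (f * g) _ x w)
  simp [V]
  ring

theorem Lop_ibp [ν.IsAddHaarMeasure] {f g : E → ℂ} (hf : Sm f) (hg : Sm g)
    {A : ι → ι → ℂ} (hA : ∀ j k, A j k = A k j) (e : ι → E) (ω : E →L[ℝ] E →L[ℝ] ℝ) :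
    ∫ x, f x * Lop A e (-ω) g x ∂ν = ∫ x, Lop A e ω f x * g x ∂ν := by
  have i1 : ∀ j k, Integrable (fun x => A j k * (f x * V (-ω) (e j) (V (-ω) (e k) g) x)) ν :=
    fun j k => ((hf.mul ((hg.V _ _).V _ _)).int ν).const_mul _
  have i2 : ∀ j k, Integrable (fun x => A j k * (V ω (e j) (V ω (e k) f) x * g x)) ν :=
    fun j k => ((((hf.V _ _).V _ _).mul hg).int ν).const_mul _
  have e1 : ∀ x, f x * Lop A e (-ω) g x = ∑ j, ∑ k, A j k * (f x * V (-ω) (e j) (V (-ω) (e k) g) x) := by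
    intro x
    simp only [Lop, Finset.mul_sum]
    refine Finset.sum_congr rfl fun j _ => Finset.sum_congr rfl fun k _ => ?_
    ring
  have e2 : ∀ x, Lop A e ω f x * g x = ∑ j, ∑ k, A j k * (V ω (e j) (V ω (e k) f) x * g x) := by
    intro x
    simp only [Lop, Finset.sum_mul, mul_assoc]
  simp_rw [e1, e2]
  rw [integral_finsetSum _ fun j _ => integrable_finsetSum _ fun k _ => i1 j k,
    integral_finsetSum _ fun j _ => integrable_finsetSum _ fun k _ => i2 j k]
  simp_rw [integral_finsetSum _ fun k _ => i1 _ k, integral_finsetSum _ fun k _ => i2 _ k]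
  rw [Finset.sum_comm]
  refine Finset.sum_congr rfl fun j _ => Finset.sum_congr rfl fun k _ => ?_
  rw [integral_const_mul, integral_const_mul, hA k j, V_ibp ν (hf.V ω (e k)) hg ω (e j),
    V_ibp ν hf (hg.V (-ω) (e j)) ω (e k), neg_neg]

/-- weak graph -/
def W (A : ι → ι → ℂ) (e : ι → E) (ω : E →L[ℝ] E →L[ℝ] ℝ) (f g : E → ℂ) : Prop :=
  ∀ χ, Sm χ → ∫ x, f x * Lop A e (-ω) χ x ∂ν = ∫ x, g x * χ x ∂ν

theorem inner_toLp {f g : E → ℂ} (hf : MemLp f 2 ν) (hg : MemLp g 2 ν) :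
    inner ℂ (hg.toLp g) (hf.toLp f) = ∫ x, f x * (starRingEnd ℂ) (g x) ∂ν := by
  rw [L2.inner_def]
  refine integral_congr_ae ?_
  filter_upwards [hf.coeFn_toLp, hg.coeFn_toLp] with x h1 h2
  rw [h1, h2]; simp [mul_comm]

theorem inner_Lp (f g : Lp ℂ 2 ν) : inner ℂ f g = ∫ x, g x * (starRingEnd ℂ) (f x) ∂ν := by
  rw [L2.inner_def]
  refine integral_congr_ae (Eventually.of_forall fun x => ?_)
  simp [mul_comm]

/-- pairing with a test function -/
theorem int_eq_inner [IsFiniteMeasureOnCompacts ν] (f : Lp ℂ 2 ν) {χ : E → ℂ} (hχ : Sm χ) :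
    ∫ x, f x * χ x ∂ν = inner ℂ ((hχ.conj.memLp ν).toLp _) f := by
  rw [inner_Lp]
  refine integral_congr_ae ?_
  filter_upwards [(hχ.conj.memLp ν).coeFn_toLp] with x h1
  rw [h1]; simp

theorem W_iff [IsFiniteMeasureOnCompacts ν] (A : ι → ι → ℂ) (e : ι → E) (ω : E →L[ℝ] E →L[ℝ] ℝ) (f g : Lp ℂ 2 ν) :
    W ν A e ω f g ↔ ∀ χ (hχ : Sm χ), inner ℂ (((hχ.Lop A e (-ω)).conj.memLp ν).toLp _) f
      = inner ℂ ((hχ.conj.memLp ν).toLp _) g := by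
  refine forall_congr' fun χ => forall_congr' fun hχ => ?_
  rw [int_eq_inner ν f (hχ.Lop A e (-ω)), int_eq_inner ν g hχ]

/-- the graph of the maximal operator -/
noncomputable def G [IsFiniteMeasureOnCompacts ν] (A : ι → ι → ℂ) (e : ι → E) (ω : E →L[ℝ] E →L[ℝ] ℝ) :
    Submodule ℂ (Lp ℂ 2 ν × Lp ℂ 2 ν) where
  carrier := {z | W ν A e ω z.1 z.2}
  zero_mem' := by
    simp only [Set.mem_setOf_eq]
    rw [W_iff]; intro χ hχ; simp
  add_mem' := by
    intro a b ha hb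
    simp only [Set.mem_setOf_eq] at *
    rw [W_iff] at *
    intro χ hχ
    rw [Prod.fst_add, Prod.snd_add, inner_add_right, inner_add_right, ha χ hχ, hb χ hχ]
  smul_mem' := by
    intro c a ha
    simp only [Set.mem_setOf_eq] at *
    rw [W_iff] at *
    intro χ hχ
    rw [Prod.smul_fst, Prod.smul_snd, inner_smul_right, inner_smul_right, ha χ hχ]

theorem mem_G [IsFiniteMeasureOnCompacts ν] (A : ι → ι → ℂ) (e : ι → E) (ω : E →L[ℝ] E →L[ℝ] ℝ) (f g : Lp ℂ 2 ν) :
    (f, g) ∈ G ν A e ω ↔ W ν A e ω f g := Iff.rfl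

theorem G_closed [IsFiniteMeasureOnCompacts ν] (A : ι → ι → ℂ) (e : ι → E) (ω : E →L[ℝ] E →L[ℝ] ℝ) :
    IsClosed (G ν A e ω : Set (Lp ℂ 2 ν × Lp ℂ 2 ν)) := by
  have : (G ν A e ω : Set (Lp ℂ 2 ν × Lp ℂ 2 ν)) = ⋂ χ, ⋂ (hχ : Sm χ),
      {z | inner ℂ (((hχ.Lop A e (-ω)).conj.memLp ν).toLp _) z.1
      = inner ℂ ((hχ.conj.memLp ν).toLp _) z.2} := by
    ext z
    simp only [SetLike.mem_coe, Set.mem_iInter, Set.mem_setOf_eq]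
    exact W_iff ν A e ω z.1 z.2
  rw [this]
  refine isClosed_iInter fun χ => isClosed_iInter fun hχ => isClosed_eq ?_ ?_
  · exact Continuous.inner continuous_const continuous_fst
  · exact Continuous.inner continuous_const continuous_snd

theorem G_sv [ν.IsAddHaarMeasure] (A : ι → ι → ℂ) (e : ι → E) (ω : E →L[ℝ] E →L[ℝ] ℝ) (g : Lp ℂ 2 ν)
    (h : (0, g) ∈ G ν A e ω) : g = 0 := by
  have h1 := (W_iff ν A e ω 0 g).1 h
  simp only [inner_zero_right] at h1
  have hl : LocallyIntegrable g ν := (Lp.memLp g).locallyIntegrable (by norm_num)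
  have := ae_eq_zero_of_integral_contDiff_smul_eq_zero hl (fun χ hχ hc => by
    have hs : Sm (fun x => (χ x : ℂ)) := ⟨Complex.ofRealCLM.contDiff.comp hχ,
      hc.comp_left (g := Complex.ofReal) Complex.ofReal_zero⟩
    have := h1 _ hs
    rw [← int_eq_inner ν g hs] at this
    rw [this]
    congr 1; ext x; simp [mul_comm])
  exact (Lp.eq_zero_iff_ae_eq_zero).2 this

theorem G_test [ν.IsAddHaarMeasure] {A : ι → ι → ℂ} (hA : ∀ j k, A j k = A k j) (e : ι → E)
    (ω : E →L[ℝ] E →L[ℝ] ℝ) {φ : E → ℂ} (hφ : Sm φ) :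
    ((hφ.memLp ν).toLp φ, ((hφ.Lop A e ω).memLp ν).toLp _) ∈ G ν A e ω := by
  rw [mem_G]
  intro χ hχ
  have h1 : ∫ x, ((hφ.memLp ν).toLp φ : E → ℂ) x * Lop A e (-ω) χ x ∂ν = ∫ x, φ x * Lop A e (-ω) χ x ∂ν := by
    refine integral_congr_ae ?_
    filter_upwards [(hφ.memLp ν).coeFn_toLp] with x hx
    rw [hx]
  have h2 : ∫ x, (((hφ.Lop A e ω).memLp ν).toLp _ : E → ℂ) x * χ x ∂ν = ∫ x, Lop A e ω φ x * χ x ∂ν := by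
    refine integral_congr_ae ?_
    filter_upwards [((hφ.Lop A e ω).memLp ν).coeFn_toLp] with x hx
    rw [hx]
  rw [h1, h2, Lop_ibp ν hφ hχ hA]

theorem G_diss [ν.IsAddHaarMeasure] {ω : E →L[ℝ] E →L[ℝ] ℝ} (hω : ∀ v w, ω v w = - ω w v)
    {A : ι → ι → ℂ} (hA : ∀ j k, A j k = A k j)
    (hpos : ∀ u : ι → ℝ, 0 ≤ ∑ j, ∑ k, (A j k).re * u j * u k) (e : ι → E)
    (f g : Lp ℂ 2 ν) (h : (f, g) ∈ G ν A e ω) : (inner ℂ f g).re ≤ 0 := by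
  rw [inner_Lp]
  exact max_diss ν hω hA hpos e (Lp.memLp f) (Lp.memLp g) h

theorem G_surj [ν.IsAddHaarMeasure] {ω : E →L[ℝ] E →L[ℝ] ℝ} (hω : ∀ v w, ω v w = - ω w v)
    {A : ι → ι → ℂ} (hA : ∀ j k, A j k = A k j)
    (hpos : ∀ u : ι → ℝ, 0 ≤ ∑ j, ∑ k, (A j k).re * u j * u k) (e : ι → E)
    (l : ℝ) (hl : 0 < l) (v : Lp ℂ 2 ν) : ∃ f g, (f, g) ∈ G ν A e ω ∧ (l : ℂ) • f - g = v := by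
  let m : (G ν A e ω) →ₗ[ℂ] Lp ℂ 2 ν :=
    LinearMap.comp ((l : ℂ) • LinearMap.fst ℂ (Lp ℂ 2 ν) (Lp ℂ 2 ν) - LinearMap.snd ℂ (Lp ℂ 2 ν) (Lp ℂ 2 ν))
      (G ν A e ω).subtype
  have hm : ∀ z, m z = (l : ℂ) • z.1.1 - z.1.2 := fun z => rfl
  have hd := G_diss ν hω hA hpos e
  -- bounded below
  have hb1 : ∀ z : G ν A e ω, l * ‖z.1.1‖ ≤ ‖m z‖ := fun z =>
    HY.diss_bound (G ν A e ω) hd l _ _ z.2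
  have hb2 : ∀ z : G ν A e ω, ‖z‖ ≤ (2 + l⁻¹) * ‖m z‖ := by
    intro z
    have h1 : ‖z.1.1‖ ≤ l⁻¹ * ‖m z‖ := by
      rw [inv_mul_eq_div, le_div_iff₀ hl, mul_comm]; exact hb1 z
    have h2 : ‖z.1.2‖ ≤ 2 * ‖m z‖ := by
      have : z.1.2 = (l : ℂ) • z.1.1 - m z := by rw [hm]; abel
      calc ‖z.1.2‖ = ‖(l : ℂ) • z.1.1 - m z‖ := by rw [← this]
        _ ≤ ‖(l : ℂ) • z.1.1‖ + ‖m z‖ := norm_sub_le _ _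
        _ = l * ‖z.1.1‖ + ‖m z‖ := by rw [norm_smul, Complex.norm_real, Real.norm_of_nonneg hl.le]
        _ ≤ 2 * ‖m z‖ := by linarith [hb1 z]
    have h0 := norm_nonneg (m z)
    have h3 : 0 ≤ l⁻¹ * ‖m z‖ := by positivity
    change ‖z.1‖ ≤ _
    rw [Prod.norm_def]
    exact max_le (by linarith) (by linarith)
  have hcs : CompleteSpace (G ν A e ω) := (G_closed ν A e ω).completeSpace_coe
  have hcl : IsClosed (LinearMap.range m : Set (Lp ℂ 2 ν)) := by
    have hc : Continuous m := by
      have : Continuous (fun z : G ν A e ω => (l : ℂ) • z.1.1 - z.1.2) := by fun_prop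
      exact this
    have ha : AntilipschitzWith (⟨2 + l⁻¹, by positivity⟩ : NNReal) m :=
      AddMonoidHomClass.antilipschitz_of_bound m hb2
    have hu : UniformContinuous m := by
      exact (ContinuousLinearMap.mk m hc).uniformContinuous
    have := ha.isClosed_range hu
    simpa [LinearMap.coe_range] using this
  have htop : LinearMap.range m = ⊤ := by
    have : CompleteSpace (LinearMap.range m) := hcl.completeSpace_coe
    rw [← Submodule.orthogonal_eq_bot_iff, Submodule.eq_bot_iff]
    intro h hh
    rw [Submodule.mem_orthogonal] at hh
    -- h is in the domain of the conjugate operator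
    have hG : (h, (l : ℂ) • h) ∈ G ν (fun j k => (starRingEnd ℂ) (A j k)) e ω := by
      rw [mem_G, W_iff]
      intro χ hχ
      have hφ := hχ.conj
      have h1 := hh _ ⟨⟨_, G_test ν hA e ω hφ⟩, rfl⟩
      rw [hm, inner_sub_left, inner_smul_left, sub_eq_zero, Complex.conj_ofReal] at h1
      rw [inner_smul_right, h1]
      refine congrArg (fun y => inner ℂ y h) ?_
      refine MemLp.toLp_congr (((hχ.Lop (fun j k => (starRingEnd ℂ) (A j k)) e (-ω)).conj.memLp ν))
        ((hφ.Lop A e ω).memLp ν) (Eventually.of_forall fun x => ?_)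
      have := Lop_conj hφ A e ω x
      simp only [Complex.conj_conj] at this
      simp only [this, Complex.conj_conj]
    have h2 := G_diss ν hω (A := fun j k => (starRingEnd ℂ) (A j k)) (fun j k => by rw [hA])
      (by simpa using hpos) e _ _ hG
    rw [inner_smul_right, inner_self_eq_norm_sq_to_K] at h2
    have h3 : l * ‖h‖ ^ 2 ≤ 0 := by
      have e1 : ((l : ℂ) * ((‖h‖ : ℂ)) ^ 2).re = l * ‖h‖ ^ 2 := by
        rw [← Complex.ofReal_pow, ← Complex.ofReal_mul, Complex.ofReal_re]
      rw [← e1]; exact h2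
    have h4 : ‖h‖ ^ 2 ≤ 0 := by
      by_contra hcon
      push Not at hcon
      nlinarith [mul_pos hl hcon]
    have h5 : ‖h‖ = 0 := by nlinarith [norm_nonneg h]
    exact norm_eq_zero.1 h5
  obtain ⟨z, hz⟩ := LinearMap.range_eq_top.1 htop v
  exact ⟨z.1.1, z.1.2, z.2, by rw [← hz, hm]⟩

end TW

namespace TW

/-- the twisting form on the plane -/
def om (n : ℕ) (c : ℝ) : Pl n →L[ℝ] Pl n →L[ℝ] ℝ :=
  c • ∑ j : Fin n,
    (((ContinuousLinearMap.proj j).comp (ContinuousLinearMap.fst ℝ (Fin n → ℝ) (Fin n → ℝ))).smulRight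
        ((ContinuousLinearMap.proj j).comp (ContinuousLinearMap.snd ℝ (Fin n → ℝ) (Fin n → ℝ)))
      - ((ContinuousLinearMap.proj j).comp (ContinuousLinearMap.snd ℝ (Fin n → ℝ) (Fin n → ℝ))).smulRight
        ((ContinuousLinearMap.proj j).comp (ContinuousLinearMap.fst ℝ (Fin n → ℝ) (Fin n → ℝ))))

theorem om_apply (n : ℕ) (c : ℝ) (p q : Pl n) :
    om n c p q = c * ∑ j : Fin n, (p.1 j * q.2 j - p.2 j * q.1 j) := by
  simp [om, ContinuousLinearMap.sum_apply]

theorem om_anti (n : ℕ) (c : ℝ) (p q : Pl n) : om n c p q = - om n c q p := by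
  rw [om_apply, om_apply, ← mul_neg, ← Finset.sum_neg_distrib]
  congr 1
  exact Finset.sum_congr rfl fun j _ => by ring

theorem om_neg (n : ℕ) (c : ℝ) : om n (-c) = - om n c := by
  refine ContinuousLinearMap.ext fun p => ContinuousLinearMap.ext fun q => ?_
  change _ = - om n c p q
  rw [om_apply, om_apply, neg_mul]

/-- coordinate vectors -/
def ev (n : ℕ) : Idx n → Pl n
  | Sum.inl j => (Pi.single j 1, 0)
  | Sum.inr j => (0, Pi.single j 1)

theorem tVop_eq (n : ℕ) (μ : ℝ) (j : Idx n) (f : Pl n → ℂ) :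
    tVop n μ j f = V (om n (Real.pi * μ)) (ev n j) f := by
  ext p
  cases j with
  | inl j =>
    have hs : ∑ i : Fin n, (p.1 i * (0 : Fin n → ℝ) i - p.2 i * (Pi.single j (1 : ℝ) : Fin n → ℝ) i) = - p.2 j := by
      simp [Pi.single_apply]
    simp only [tVop, V, ev, om_apply]
    rw [hs]; push_cast; ring
  | inr j =>
    have hs : ∑ i : Fin n, (p.1 i * (Pi.single j (1 : ℝ) : Fin n → ℝ) i - p.2 i * (0 : Fin n → ℝ) i) = p.1 j := by
      simp [Pi.single_apply]
    simp only [tVop, V, ev, om_apply]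
    rw [hs]; push_cast; ring

theorem tLop_eq (n : ℕ) (A : Matrix (Idx n) (Idx n) ℂ) (μ : ℝ) (f : Pl n → ℂ) :
    tLop n A μ f = Lop A (ev n) (om n (Real.pi * μ)) f := by
  ext p
  simp only [tLop, Lop, tVop_eq]

theorem WeakTL_iff (n : ℕ) (A : Matrix (Idx n) (Idx n) ℂ) (μ : ℝ) (f g : Pl n → ℂ) :
    WeakTL n A μ f g ↔ W volume A (ev n) (om n (Real.pi * μ)) f g := by
  simp only [WeakTL, W, tLop_eq, mul_neg, om_neg, Sm, and_imp]

theorem pos_of_RePosQ (n : ℕ) (A : Matrix (Idx n) (Idx n) ℂ) (h : RePosQ n (-(A * Jmat n)))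
    (u : Idx n → ℝ) : 0 ≤ ∑ j, ∑ k, (A j k).re * u j * u k := by
  let v : Idx n → ℝ := Sum.elim (fun j => - u (Sum.inr j)) (fun j => u (Sum.inl j))
  have h1 : (Jmat n).mulVec (realVec n v) = realVec n u := by
    ext i
    cases i <;> simp [Jmat, Matrix.mulVec, dotProduct, realVec, v, Matrix.one_apply]
  have h2 : Matrix.vecMul (realVec n v) (Jmat n) = - realVec n u := by
    ext i
    cases i <;> simp [Jmat, Matrix.vecMul, dotProduct, realVec, v, Matrix.one_apply]
  have h3 := h v
  rw [sigmaC, Matrix.neg_mulVec, ← Matrix.mulVec_mulVec, h1, Matrix.dotProduct_mulVec, h2,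
    neg_dotProduct_neg] at h3
  convert h3 using 1
  simp only [dotProduct, Matrix.mulVec, realVec, Complex.re_sum, Finset.mul_sum]
  refine Finset.sum_congr rfl fun j _ => Finset.sum_congr rfl fun k _ => ?_
  simp
  ring

end TW

/-- for `μ ≠ 0` and `Re Q_S ≥ 0` (`S = -AJ`), the maximal operator
`L̃^μ_S` on `L²(ℝ^{2n})` and its adjoint `L̃^μ_{S̄}` are dissipative, and `L̃^μ_S`
generates a contraction semigroup `T(t) = exp(t L̃^μ_S)`, `t ≥ 0`, on `L²(ℝ^{2n})`:
`T` satisfies the semigroup law, `‖T(t)‖ ≤ 1`, is strongly continuous, and its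
infinitesimal generator is exactly the maximal operator `L̃^μ_S`. -/
theorem statement12 (n : ℕ) (A : Matrix (Idx n) (Idx n) ℂ) (hA : Aᵀ = A)
    (μ : ℝ) (hμ : μ ≠ 0) (hpos : RePosQ n (-(A * Jmat n))) :
    (∀ f g : Lp ℂ 2 (volume : Measure (Pl n)), WeakTL n A μ ⇑f ⇑g →
        (∫ x, g x * (starRingEnd ℂ) (f x)).re ≤ 0) ∧
    (∀ f g : Lp ℂ 2 (volume : Measure (Pl n)),
        WeakTL n (A.map (starRingEnd ℂ)) μ ⇑f ⇑g →
        (∫ x, g x * (starRingEnd ℂ) (f x)).re ≤ 0) ∧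
    ∃ T : ℝ → Lp ℂ 2 (volume : Measure (Pl n)) →L[ℂ] Lp ℂ 2 (volume : Measure (Pl n)),
      T 0 = ContinuousLinearMap.id ℂ _ ∧
      (∀ s t : ℝ, 0 ≤ s → 0 ≤ t → T (s + t) = (T s).comp (T t)) ∧
      (∀ t : ℝ, 0 ≤ t → ‖T t‖ ≤ 1) ∧
      (∀ f : Lp ℂ 2 (volume : Measure (Pl n)), ContinuousOn (fun t => T t f) (Set.Ici 0)) ∧
      (∀ f g : Lp ℂ 2 (volume : Measure (Pl n)),
        WeakTL n A μ ⇑f ⇑g ↔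
          Filter.Tendsto (fun t : ℝ => (t⁻¹ : ℝ) • (T t f - f))
            (nhdsWithin 0 (Set.Ioi 0)) (nhds g)) := by
  have hA' : ∀ j k, A j k = A k j := fun j k => by
    conv_lhs => rw [← hA]
    rfl
  have hp := TW.pos_of_RePosQ n A hpos
  have hω := TW.om_anti n (Real.pi * μ)
  have hvol : (volume : Measure (Pl n)).IsAddHaarMeasure := by
    rw [Measure.volume_eq_prod]; exact Measure.prod.instIsAddHaarMeasure _ _
  refine ⟨fun f g h => ?_, fun f g h => ?_, ?_⟩
  · exact TW.max_diss volume hω hA' hp (TW.ev n) (Lp.memLp f) (Lp.memLp g)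
      ((TW.WeakTL_iff n A μ f g).1 h)
  · exact TW.max_diss volume hω (A := A.map (starRingEnd ℂ)) (fun j k => by simp [hA' j k])
      (by simpa using hp) (TW.ev n) (Lp.memLp f) (Lp.memLp g)
      ((TW.WeakTL_iff n _ μ f g).1 h)
  · simp only [TW.WeakTL_iff]
    exact HY.hille_yosida (TW.G volume A (TW.ev n) (TW.om n (Real.pi * μ)))
      (TW.G_diss volume hω hA' hp (TW.ev n))
      (fun l hl v => TW.G_surj volume hω hA' hp (TW.ev n) l hl v)
      (fun g h => TW.G_sv volume A (TW.ev n) _ g h)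
end
end

section
/- Assume S ∈ sp(n,ℂ) satisfies S² = 0 and Re Q_S ≥ 0. Then one can select a symplectic basis X_1,…,X_n,Y_1,…,Y_n of ℝ^{2n} such that L_S = Σ_{j,k=1}^m b_{jk} Y_j Y_k for some m ≤ n and complex coefficients b_{jk}; equivalently, there exists a real symplectic matrix T ∈ Sp(n,ℝ) such that the symmetric matrix ᵗT A T (where S = −AJ) has nonzero entries only in the m×m block corresponding to the coordinates Y_1,…,Y_m. -/
open MeasureTheory Complex Matrix

noncomputable section

lemma JmatR_sq (n : ℕ) : JmatR n * JmatR n = -1 := by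
  simp [JmatR, Matrix.fromBlocks_multiply, ← Matrix.fromBlocks_one, Matrix.fromBlocks_neg]

lemma JmatR_tr (n : ℕ) : (JmatR n)ᵀ = -JmatR n := by
  simp [JmatR, Matrix.fromBlocks_transpose, Matrix.fromBlocks_neg]

lemma JmatR_skew (n : ℕ) (x y : Idx n → ℝ) :
    x ⬝ᵥ JmatR n *ᵥ y = -(y ⬝ᵥ JmatR n *ᵥ x) := by
  rw [Matrix.dotProduct_mulVec, ← Matrix.mulVec_transpose, JmatR_tr, Matrix.neg_mulVec,
    neg_dotProduct, dotProduct_comm]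

lemma exists_lag (n : ℕ) (W : Submodule ℝ (Idx n → ℝ))
    (h : ∀ x ∈ W, ∀ y ∈ W, x ⬝ᵥ JmatR n *ᵥ y = 0) :
    ∃ X : Fin n → Idx n → ℝ, (∀ i j, X i ⬝ᵥ X j = if i = j then 1 else 0) ∧
      (∀ i j, X i ⬝ᵥ JmatR n *ᵥ X j = 0) ∧ ∀ i, ∀ w ∈ W, X i ⬝ᵥ JmatR n *ᵥ w = 0 := by
  classical
  obtain ⟨L, ⟨hWL, hL⟩, hmax⟩ := (wellFounded_gt (α := Submodule ℝ (Idx n → ℝ))).has_min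
    {L | W ≤ L ∧ ∀ x ∈ L, ∀ y ∈ L, x ⬝ᵥ JmatR n *ᵥ y = 0} ⟨W, le_rfl, h⟩
  set B : LinearMap.BilinForm ℝ (Idx n → ℝ) := Matrix.toBilin' (JmatR n) with hB
  have hBa : ∀ x y, B x y = x ⬝ᵥ JmatR n *ᵥ y := fun x y => Matrix.toBilin'_apply' _ _ _
  have hdet : (JmatR n).det ≠ 0 := by
    have : IsUnit (JmatR n) := by
      refine IsUnit.of_mul_eq_one (-JmatR n) ?_
      rw [mul_neg, JmatR_sq, neg_neg]
    exact ((Matrix.isUnit_iff_isUnit_det _).1 this).ne_zero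
  have hnd : B.Nondegenerate := LinearMap.BilinForm.nondegenerate_toBilin'_of_det_ne_zero' _ hdet
  have hrefl : B.IsRefl := by
    intro x y hxy
    rw [hBa] at *
    rw [JmatR_skew, hxy, neg_zero]
  have horth : B.orthogonal L = L := by
    apply le_antisymm
    · intro v hv
      have hv' : ∀ x ∈ L, x ⬝ᵥ JmatR n *ᵥ v = 0 := fun x hx => by
        rw [← hBa]; exact hv x hx
      have hv'' : ∀ x ∈ L, v ⬝ᵥ JmatR n *ᵥ x = 0 := fun x hx => by
        rw [JmatR_skew, hv' x hx, neg_zero]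
      have hvv : v ⬝ᵥ JmatR n *ᵥ v = 0 := by
        have := JmatR_skew n v v
        linarith
      by_contra hvL
      refine hmax (L ⊔ Submodule.span ℝ {v}) ⟨hWL.trans le_sup_left, ?_⟩ ?_
      · intro x hx y hy
        obtain ⟨a, ha, b, hb, rfl⟩ := Submodule.mem_sup.1 hx
        obtain ⟨c, hc, d, hd, rfl⟩ := Submodule.mem_sup.1 hy
        obtain ⟨r, rfl⟩ := Submodule.mem_span_singleton.1 hb
        obtain ⟨s, rfl⟩ := Submodule.mem_span_singleton.1 hd
        simp [Matrix.mulVec_add, Matrix.mulVec_smul, hL a ha c hc, hv' a ha, hv'' c hc, hvv]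
      · refine lt_of_le_of_ne le_sup_left fun he => hvL ?_
        rw [he]
        exact Submodule.mem_sup_right (Submodule.mem_span_singleton_self v)
    · intro v hv x hx
      change B x v = 0
      rw [hBa]; exact hL x hx v hv
  have hfr : Module.finrank ℝ L = n := by
    have h1 := LinearMap.BilinForm.finrank_orthogonal hnd L
    have h2 := Submodule.finrank_le L
    rw [horth] at h1
    simp at h1 h2
    omega
  let e := (WithLp.linearEquiv 2 ℝ (Idx n → ℝ)).symm
  let L' : Submodule ℝ (EuclideanSpace ℝ (Idx n)) := L.map e.toLinearMap
  have hfr' : Module.finrank ℝ L' = n := by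
    exact (LinearEquiv.finrank_map_eq e L).trans hfr
  let b := (stdOrthonormalBasis ℝ L').reindex (finCongr hfr')
  have hmem : ∀ i, e.symm (b i : EuclideanSpace ℝ (Idx n)) ∈ L := by
    intro i
    obtain ⟨y, hy, hye⟩ := (b i).2
    rw [← hye]; simpa using hy
  refine ⟨fun i => e.symm (b i : EuclideanSpace ℝ (Idx n)), ?_, ?_, ?_⟩
  · intro i j
    have := orthonormal_iff_ite.1 b.orthonormal i j
    rw [← this, Submodule.coe_inner, EuclideanSpace.inner_eq_star_dotProduct, dotProduct_comm]
    rfl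
  · exact fun i j => hL _ (hmem i) _ (hmem j)
  · exact fun i w hw => hL _ (hmem i) _ (hWL hw)

lemma ker_re (n : ℕ) (A : Matrix (Idx n) (Idx n) ℂ) (hA : Aᵀ = A)
    (hp : ∀ v : Idx n → ℝ, 0 ≤ v ⬝ᵥ (A.map Complex.re) *ᵥ v)
    (x y : Idx n → ℝ)
    (h1 : A.map Complex.re *ᵥ x - A.map Complex.im *ᵥ y = 0)
    (h2 : A.map Complex.re *ᵥ y + A.map Complex.im *ᵥ x = 0) :
    A.map Complex.re *ᵥ x = 0 ∧ A.map Complex.re *ᵥ y = 0 ∧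
    A.map Complex.im *ᵥ x = 0 ∧ A.map Complex.im *ᵥ y = 0 := by
  set B := A.map Complex.re with hB
  set C := A.map Complex.im with hC
  have hBt : Bᵀ = B := by rw [hB, ← Matrix.transpose_map, hA]
  have hCt : Cᵀ = C := by rw [hC, ← Matrix.transpose_map, hA]
  have hpsd : B.PosSemidef := by
    refine Matrix.PosSemidef.of_dotProduct_mulVec_nonneg ?_ ?_
    · rw [Matrix.IsHermitian, Matrix.conjTranspose_eq_transpose_of_trivial, hBt]
    · intro v; simpa using hp v
  have hs : x ⬝ᵥ C *ᵥ y = y ⬝ᵥ C *ᵥ x := by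
    rw [Matrix.dotProduct_mulVec, ← Matrix.mulVec_transpose, hCt, dotProduct_comm]
  have e1 : x ⬝ᵥ B *ᵥ x - x ⬝ᵥ C *ᵥ y = 0 := by rw [← dotProduct_sub, h1, dotProduct_zero]
  have e2 : y ⬝ᵥ B *ᵥ y + y ⬝ᵥ C *ᵥ x = 0 := by rw [← dotProduct_add, h2, dotProduct_zero]
  have hx := hp x
  have hy := hp y
  have hx0 : B *ᵥ x = 0 := (hpsd.dotProduct_mulVec_zero_iff x).1 (by simp; linarith)
  have hy0 : B *ᵥ y = 0 := (hpsd.dotProduct_mulVec_zero_iff y).1 (by simp; linarith)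
  rw [hx0, zero_sub, neg_eq_zero] at h1
  rw [hy0, zero_add] at h2
  exact ⟨hx0, hy0, h2, h1⟩

lemma re_im_decomp {n : ℕ} (A : Matrix (Idx n) (Idx n) ℂ) :
    A = (A.map Complex.re).map Complex.ofReal +
      Complex.I • (A.map Complex.im).map Complex.ofReal := by
  ext i j
  simp [mul_comm Complex.I, Complex.re_add_im]

lemma Jmat_eq (n : ℕ) : Jmat n = (JmatR n).map Complex.ofReal := by
  ext i j
  rcases i with i | i <;> rcases j with j | j <;> simp [Jmat, JmatR, Matrix.one_apply] <;>
    split_ifs <;> simp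

/-- if `S² = 0` and `Re Q_S ≥ 0`, then there are `m ≤ n` and a real
symplectic change of basis `T ∈ Sp(n,ℝ)` after which the coefficient matrix of `L_S`
is supported in the `Y_1, …, Y_m` block, i.e. `L_S = Σ_{j,k=1}^m b_{jk} Y_j Y_k`. -/
theorem statement18 (n : ℕ) (A : Matrix (Idx n) (Idx n) ℂ) (hA : Aᵀ = A)
    (S : Matrix (Idx n) (Idx n) ℂ) (hS : S = -(A * Jmat n))
    (hS2 : S * S = 0) (hpos : RePosQ n S) :
    ∃ (m : ℕ) (T : Matrix (Idx n) (Idx n) ℝ), m ≤ n ∧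
      Tᵀ * JmatR n * T = JmatR n ∧
      ∀ j k : Idx n, ((T.map Complex.ofReal)ᵀ * A * (T.map Complex.ofReal)) j k ≠ 0 →
        ∃ a b : Fin n, j = Sum.inr a ∧ k = Sum.inr b ∧ (a : ℕ) < m ∧ (b : ℕ) < m := by
  classical
  set B := A.map Complex.re with hB
  set C := A.map Complex.im with hC
  have hBt : Bᵀ = B := by rw [hB, ← Matrix.transpose_map, hA]
  have hCt : Cᵀ = C := by rw [hC, ← Matrix.transpose_map, hA]
  have hJJ : Jmat n * Jmat n = -1 := by
    simp [Jmat, Matrix.fromBlocks_multiply, ← Matrix.fromBlocks_one, Matrix.fromBlocks_neg]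
  have hAJA : A * Jmat n * A = 0 := by
    have h1 : A * Jmat n * A * Jmat n = 0 := by
      rw [hS] at hS2
      simpa [Matrix.mul_assoc] using hS2
    have h2 : A * Jmat n * A * (Jmat n * Jmat n) = 0 := by
      rw [← Matrix.mul_assoc, h1, Matrix.zero_mul]
    rw [hJJ] at h2
    simpa using h2
  have hre : ∀ (M : Matrix (Idx n) (Idx n) ℂ) (v w : Idx n → ℝ),
      (realVec n v ⬝ᵥ M *ᵥ realVec n w).re = v ⬝ᵥ M.map Complex.re *ᵥ w := by
    intro M v w
    simp [realVec, dotProduct, Matrix.mulVec]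
  have hp : ∀ v : Idx n → ℝ, 0 ≤ v ⬝ᵥ B *ᵥ v := by
    intro v
    have h := hpos (JmatR n *ᵥ v)
    have hJS : Jmat n * S = -(Jmat n * A * Jmat n) := by rw [hS]; simp [Matrix.mul_assoc]
    rw [sigmaC, Matrix.mulVec_mulVec, hJS, hre] at h
    have hm : (-(Jmat n * A * Jmat n)).map Complex.re = -(JmatR n * B * JmatR n) := by
      rw [Jmat_eq]
      ext i j
      simp [Matrix.mul_apply, hB]
    rw [hm] at h
    have h3 : (JmatR n *ᵥ v) ⬝ᵥ (-(JmatR n * B * JmatR n)) *ᵥ (JmatR n *ᵥ v)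
        = v ⬝ᵥ B *ᵥ v := by
      rw [Matrix.mulVec_mulVec, dotProduct_comm, Matrix.dotProduct_mulVec,
        ← Matrix.mulVec_transpose, Matrix.mulVec_mulVec, JmatR_tr, dotProduct_comm]
      congr 2
      calc -JmatR n * (-(JmatR n * B * JmatR n) * JmatR n)
          = (JmatR n * JmatR n) * B * (JmatR n * JmatR n) := by
            simp only [Matrix.mul_assoc, neg_mul, mul_neg, neg_neg]
        _ = B := by rw [JmatR_sq]; simp
    rwa [h3] at h
  -- real and imaginary parts of A J A = 0
  have hE1 : B * JmatR n * B - C * JmatR n * C = 0 := by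
    have := congrArg (fun M => M.map Complex.re) hAJA
    rw [Jmat_eq] at this
    ext i j
    have := congrFun (congrFun this i) j
    simpa [Matrix.mul_apply, hB, hC, Finset.sum_sub_distrib, -Fintype.sum_sum_type] using this
  have hE2 : B * JmatR n * C + C * JmatR n * B = 0 := by
    have := congrArg (fun M => M.map Complex.im) hAJA
    rw [Jmat_eq] at this
    ext i j
    have := congrFun (congrFun this i) j
    simpa [Matrix.mul_apply, hB, hC, Finset.sum_add_distrib, -Fintype.sum_sum_type] using this
  have hK : ∀ v, B *ᵥ (JmatR n *ᵥ (B *ᵥ v)) = 0 ∧ B *ᵥ (JmatR n *ᵥ (C *ᵥ v)) = 0 ∧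
      C *ᵥ (JmatR n *ᵥ (B *ᵥ v)) = 0 ∧ C *ᵥ (JmatR n *ᵥ (C *ᵥ v)) = 0 := by
    intro v
    apply ker_re n A hA hp
    · have := congrArg (fun M => M *ᵥ v) hE1
      simpa [Matrix.sub_mulVec, ← Matrix.mulVec_mulVec] using this
    · have := congrArg (fun M => M *ᵥ v) hE2
      simpa [Matrix.add_mulVec, ← Matrix.mulVec_mulVec] using this
  have symm : ∀ (M : Matrix (Idx n) (Idx n) ℝ), Mᵀ = M → ∀ x y, (M *ᵥ x) ⬝ᵥ y = x ⬝ᵥ M *ᵥ y := by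
    intro M hM x y
    rw [Matrix.dotProduct_mulVec, ← Matrix.mulVec_transpose, hM]
  have hJv : ∀ v, JmatR n *ᵥ (JmatR n *ᵥ v) = -v := by
    intro v; rw [Matrix.mulVec_mulVec, JmatR_sq]; exact (Matrix.neg_mulVec v 1).trans (by rw [Matrix.one_mulVec])
  have hJo : ∀ x y, (JmatR n *ᵥ x) ⬝ᵥ y = -(x ⬝ᵥ JmatR n *ᵥ y) := by
    intro x y
    rw [dotProduct_comm]
    exact JmatR_skew n y x
  let W : Submodule ℝ (Idx n → ℝ) :=
    LinearMap.range (((JmatR n * B).mulVecLin).coprod ((JmatR n * C).mulVecLin))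
  have hW : ∀ x ∈ W, ∀ y ∈ W, x ⬝ᵥ JmatR n *ᵥ y = 0 := by
    rintro _ ⟨⟨a, b⟩, rfl⟩ _ ⟨⟨c, d⟩, rfl⟩
    simp only [LinearMap.coprod_apply, Matrix.mulVecLin_apply, ← Matrix.mulVec_mulVec,
      Matrix.mulVec_add, hJv, add_dotProduct, dotProduct_add, dotProduct_neg]
    obtain ⟨c1, c2, c3, c4⟩ := hK c
    obtain ⟨d1, d2, d3, d4⟩ := hK d
    simp only [hJo, symm B hBt, symm C hCt, c1, c2, c3, c4, d1, d2, d3, d4]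
    simp
  obtain ⟨X, hXo, hXi, hXW⟩ := exists_lag n W hW
  have hz : ∀ (M : Matrix (Idx n) (Idx n) ℝ), Mᵀ = M → (∀ u, JmatR n *ᵥ (M *ᵥ u) ∈ W) →
      ∀ i, M *ᵥ X i = 0 := by
    intro M hM hMW i
    have h := hXW i _ (hMW (M *ᵥ X i))
    rw [hJv, dotProduct_neg, neg_eq_zero, ← symm M hM] at h
    exact dotProduct_self_eq_zero.1 h
  have hBX : ∀ i, B *ᵥ X i = 0 := hz B hBt fun u => ⟨(u, 0), by simp⟩
  have hCX : ∀ i, C *ᵥ X i = 0 := hz C hCt fun u => ⟨(0, u), by simp⟩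
  have hAX : ∀ i, A *ᵥ realVec n (X i) = 0 := by
    intro i
    ext k
    have h1 := congrFun (hBX i) k
    have h2 := congrFun (hCX i) k
    apply Complex.ext
    · simpa [Matrix.mulVec, dotProduct, hB, realVec] using h1
    · simpa [Matrix.mulVec, dotProduct, hC, realVec] using h2
  let T : Matrix (Idx n) (Idx n) ℝ :=
    Matrix.of fun i j => Sum.elim X (fun k => -(JmatR n *ᵥ X k)) j i
  have hT : ∀ (M : Matrix (Idx n) (Idx n) ℝ) j k, (Tᵀ * M * T) j k =
      (Sum.elim X (fun k => -(JmatR n *ᵥ X k)) j) ⬝ᵥ M *ᵥ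
        (Sum.elim X (fun k => -(JmatR n *ᵥ X k)) k) := by
    intro M j k
    rw [Matrix.mul_assoc]
    simp [Matrix.mul_apply, dotProduct, Matrix.mulVec, T]
  have hcol : ∀ j k, ((T.map Complex.ofReal)ᵀ * A * (T.map Complex.ofReal)) j (Sum.inl k) = 0 := by
    intro j k
    have : ((T.map Complex.ofReal)ᵀ * A * (T.map Complex.ofReal)) j (Sum.inl k) =
      (fun i => (T.map Complex.ofReal) i j) ⬝ᵥ A *ᵥ realVec n (X k) := by
      rw [Matrix.mul_assoc]
      simp [Matrix.mul_apply, dotProduct, Matrix.mulVec, T, realVec]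
    rw [this, hAX, dotProduct_zero]
  have hsym : ((T.map Complex.ofReal)ᵀ * A * (T.map Complex.ofReal))ᵀ =
      (T.map Complex.ofReal)ᵀ * A * (T.map Complex.ofReal) := by
    rw [Matrix.transpose_mul, Matrix.transpose_mul, Matrix.transpose_transpose, hA,
      Matrix.mul_assoc]
  refine ⟨n, T, le_rfl, ?_, ?_⟩
  · ext j k
    rw [hT]
    rcases j with j | j <;> rcases k with k | k
    · have h0 : JmatR n (Sum.inl j) (Sum.inl k) = 0 := by simp [JmatR]
      simp only [Sum.elim_inl, h0, hXi]
    · have h0 : JmatR n (Sum.inl j) (Sum.inr k) = if j = k then 1 else 0 := by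
        simp [JmatR, Matrix.one_apply]
      simp only [Sum.elim_inl, Sum.elim_inr, h0, Matrix.mulVec_neg, hJv, neg_neg, hXo]
    · have h0 : JmatR n (Sum.inr j) (Sum.inl k) = -if j = k then 1 else 0 := by
        simp [JmatR, Matrix.one_apply]
      simp only [Sum.elim_inl, Sum.elim_inr, h0, neg_dotProduct, hJo, hJv, dotProduct_neg,
        neg_neg, hXo]
    · have h0 : JmatR n (Sum.inr j) (Sum.inr k) = 0 := by simp [JmatR]
      simp only [Sum.elim_inr, h0, Matrix.mulVec_neg, hJv, neg_neg, neg_dotProduct, hJo, hXi,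
        neg_zero]
  · intro j k hjk
    rcases k with k | k
    · exact absurd (hcol j k) hjk
    rcases j with j | j
    · rw [← hsym] at hjk
      exact absurd (hcol (Sum.inr k) j) hjk
    exact ⟨j, k, rfl, rfl, j.2, k.2⟩
end
end
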